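/- Let K be a number field, f ∈ O_K[X] monic squarefree of odd degree at least 3, and S a finite set of nonzero primes of O_K such that O := O_{K,S} is a PID; let δ be a density on O. Let A, B, C ∈ O[X] with B² − A·C = f, [A,2B,C] primitive over O[X], A coprime to f in K[X], and assume that the class of the ideal ⟨A, Y − B⟩ in Cl(K[X][Y]/⟨Y² − f⟩) is not a square (equivalently, there exist no ε ∈ Kˣ and p ∈ K[X] with f dividing A − ε·p²). Then the set of n ∈ O such that the specialized form [A(n), 2B(n), C(n)] is NOT GL₂ᵗʷ-equivalent over O to the principal form [1, 0, −f(n)] has density 1: δ({n ∈ O : [A(n),2B(n),C(n)] is not GL₂ᵗʷ-equivalent over O to [1,0,−f(n)]}) = 1. In particular there are infinitely many such n; these correspond to non-trivial specializations of the associated ideal class of Pic(O[X,Y]/⟨Y² − f⟩) in Pic(O[Y]/⟨Y² − f(n)⟩). -/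

import Mathlib

open Polynomial FractionalIdeal IsDedekindDomain NumberField

open scoped nonZeroDivisors

/-- The ring of `S`-integers of a number field `K`. -/
noncomputable abbrev SInt (K : Type*) [Field K] [NumberField K]
    (S : Finset (HeightOneSpectrum (𝓞 K))) : Type _ :=
  ((S : Set (HeightOneSpectrum (𝓞 K))).integer K)

/-- The coordinate ring `A_f := K[X][Y]/⟨Y² − f⟩` of the affine hyperelliptic
curve `Y² = f(X)`. -/
noncomputable def HypRing (K : Type*) [Field K] (f : K[X]) : Type _ :=
  Polynomial K[X] ⧸ Ideal.span {(X : Polynomial K[X]) ^ 2 - C f}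

noncomputable instance (K : Type*) [Field K] (f : K[X]) : CommRing (HypRing K f) :=
  Ideal.Quotient.commRing _

/-- The quotient map `K[X][Y] → A_f`. -/
noncomputable def HypRing.mk (K : Type*) [Field K] (f : K[X]) :
    Polynomial K[X] →+* HypRing K f :=
  Ideal.Quotient.mk _

/-- The ideal `⟨a, Y − b⟩` of `A_f`. -/
noncomputable def HypIdeal (K : Type*) [Field K] (f a b : K[X]) :
    Ideal (HypRing K f) :=
  Ideal.span {HypRing.mk K f (C a), HypRing.mk K f (X - C b)}


section
open scoped ENNReal

noncomputable def msz {T : Type*} (w : T → ℝ≥0∞) : ℝ≥0∞ := ∑' m : Multiset T, (m.map w).prod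

theorem msz_mono_inj {T T' : Type*} (w : T → ℝ≥0∞) (w' : T' → ℝ≥0∞) (i : T → T')
    (hi : Function.Injective i) (h : ∀ t, w t ≤ w' (i t)) : msz w ≤ msz w' := by
  unfold msz
  calc ∑' m : Multiset T, (m.map w).prod ≤ ∑' m : Multiset T, ((m.map i).map w').prod := by
        refine ENNReal.tsum_le_tsum fun m => ?_
        rw [Multiset.map_map]
        exact Multiset.prod_map_le_prod_map _ _ fun t _ => h t
    _ ≤ _ := ENNReal.tsum_comp_le_tsum_of_injective (f := Multiset.map i) (Multiset.map_injective hi)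
        (fun m : Multiset T' => (m.map w').prod)

theorem filterMap_none' {α β : Type*} (m : Multiset α) :
    Multiset.filterMap (fun _ => (none : Option β)) m = 0 := by
  induction m using Multiset.induction_on with
  | empty => simp
  | cons a m ih => simpa using ih

theorem msz_sum {T T' : Type*} (w : T → ℝ≥0∞) (w' : T' → ℝ≥0∞) :
    msz (Sum.elim w w') = msz w * msz w' := by
  unfold msz
  let F : Multiset T × Multiset T' → Multiset (T ⊕ T') :=
    fun p => p.1.map Sum.inl + p.2.map Sum.inr
  have hF : Function.Bijective F := by
    constructor
    · rintro ⟨a, b⟩ ⟨c, d⟩ h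
      have h1 := congrArg (Multiset.filterMap Sum.getLeft?) h
      have h2 := congrArg (Multiset.filterMap Sum.getRight?) h
      simp [F, Multiset.filterMap_add, Multiset.filterMap_map, Function.comp_def, filterMap_none'] at h1 h2
      simpa using ⟨h1, h2⟩
    · intro m
      induction m using Multiset.induction_on with
      | empty => exact ⟨(0, 0), by simp [F]⟩
      | cons a m ih =>
        obtain ⟨⟨x, y⟩, rfl⟩ := ih
        rcases a with a | a
        · exact ⟨(a ::ₘ x, y), by simp [F]⟩
        · exact ⟨(x, a ::ₘ y), by simp [F]⟩
  rw [← (Equiv.ofBijective F hF).tsum_eq, ENNReal.tsum_prod']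
  simp [F, Function.comp_def, ENNReal.tsum_mul_left, ENNReal.tsum_mul_right]

theorem tsum_tuple {T : Type*} (w : T → ℝ≥0∞) (n : ℕ) :
    ∑' v : Fin n → T, ∏ i, w (v i) = (∑' t, w t) ^ n := by
  induction n with
  | zero => simp
  | succ n ih =>
    rw [← (Fin.consEquiv (fun _ => T)).tsum_eq, ENNReal.tsum_prod', pow_succ', ← ih]
    simp [Fin.consEquiv, Fin.prod_univ_succ, ENNReal.tsum_mul_left, ENNReal.tsum_mul_right]

theorem msz_le_geom {T : Type*} (w : T → ℝ≥0∞) :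
    msz w ≤ ∑' k : ℕ, (∑' t, w t) ^ k := by
  unfold msz
  let F : (Σ n, Fin n → T) → Multiset T := fun p => (List.ofFn p.2 : Multiset T)
  have hF : Function.Surjective F := by
    intro m
    induction m using Quotient.inductionOn with
    | h l => exact ⟨⟨l.length, l.get⟩, by simp [F]⟩
  refine (ENNReal.tsum_le_tsum_comp_of_surjective hF _).trans ?_
  rw [ENNReal.tsum_sigma']
  refine ENNReal.tsum_le_tsum fun n => ?_
  rw [← tsum_tuple]
  simp [F, List.prod_ofFn, List.map_ofFn]

theorem msz_lt_top_of_lt_one {T : Type*} (w : T → ℝ≥0∞) (h : ∑' t, w t < 1) : msz w < ⊤ := by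
  refine (msz_le_geom w).trans_lt ?_
  rw [ENNReal.tsum_geometric, lt_top_iff_ne_top, Ne, ENNReal.inv_eq_top]
  exact (tsub_pos_of_lt h).ne'

theorem msz_le_split {T : Type*} (w : T → ℝ≥0∞) (H : Set T) :
    msz w ≤ msz (fun t : H => w t) * msz (fun t : (Hᶜ : Set T) => w t) := by
  classical
  rw [← msz_sum]
  refine msz_mono_inj _ _ (Equiv.Set.sumCompl H).symm (Equiv.injective _) fun t => ?_
  by_cases ht : t ∈ H
  · rw [Equiv.Set.sumCompl_symm_apply_of_mem ht]; simp
  · rw [Equiv.Set.sumCompl_symm_apply_of_notMem ht]; simp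

theorem msz_lt_top_finite {T : Type*} (w : T → ℝ≥0∞) (h1 : ∀ t, w t < 1) (F : Finset T) :
    msz (fun t : (F : Set T) => w t) < ⊤ := by
  classical
  induction F using Finset.induction_on with
  | empty =>
    apply msz_lt_top_of_lt_one; simp
  | insert a F ha ih =>
    refine (msz_le_split (fun t : ((insert a F : Finset T) : Set T) => w t)
      {t | (t : T) = a}).trans_lt (ENNReal.mul_lt_top ?_ ?_)
    · refine lt_of_le_of_lt (msz_mono_inj _ (fun _ : Unit => w a) (fun _ => ()) ?_ ?_) ?_
      · rintro ⟨⟨x, hx⟩, hx'⟩ ⟨⟨y, hy⟩, hy'⟩ _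
        simp at hx' hy'
        simp [hx', hy']
      · rintro ⟨⟨x, hx⟩, hx'⟩
        simp at hx'
        simp [hx']
      · apply msz_lt_top_of_lt_one; simpa using h1 a
    · have hm : ∀ t : (({t | (t : T) = a}ᶜ : Set ((insert a F : Finset T) : Set T))),
          (t.1.1 : T) ∈ (F : Set T) := by
        rintro ⟨⟨x, hx⟩, hx'⟩
        simp at hx hx'
        rcases hx with h | h
        · exact absurd h hx'
        · exact h
      refine lt_of_le_of_lt (msz_mono_inj _ (fun t : (F : Set T) => w t)
        (fun t => ⟨t.1.1, hm t⟩) ?_ ?_) ih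
      · rintro ⟨⟨x, hx⟩, hx'⟩ ⟨⟨y, hy⟩, hy'⟩ h
        simpa using h
      · intro t; exact le_rfl

theorem msz_lt_top {T : Type*} (w : T → ℝ≥0∞) (h1 : ∀ t, w t < 1) (h : ∑' t, w t ≠ ⊤) :
    msz w < ⊤ := by
  have := ENNReal.tendsto_tsum_compl_atTop_zero h
  obtain ⟨F, hF⟩ := (this.eventually (gt_mem_nhds (show (0:ℝ≥0∞) < 1 by simp))).exists
  refine (msz_le_split w (F : Set T)).trans_lt (ENNReal.mul_lt_top (msz_lt_top_finite w h1 F) ?_)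
  exact msz_lt_top_of_lt_one _ hF

open NumberField IsDedekindDomain Filter Topology in
noncomputable def Zet (L : Type*) [Field L] [NumberField L] (s : ℝ) : ℝ≥0∞ :=
  msz (fun P : HeightOneSpectrum (𝓞 L) => ENNReal.ofReal ((Ideal.absNorm P.asIdeal : ℝ) ^ (-s)))

section
open NumberField IsDedekindDomain Filter Topology

theorem hos_prod_bij (L : Type*) [Field L] [NumberField L] :
    Function.Bijective (fun m : Multiset (HeightOneSpectrum (𝓞 L)) =>
      (⟨(m.map HeightOneSpectrum.asIdeal).prod, by
        rw [Ne, Multiset.prod_eq_zero_iff]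
        intro h
        obtain ⟨P, _, hP⟩ := Multiset.mem_map.1 h
        exact P.ne_bot hP⟩ : {I : Ideal (𝓞 L) // I ≠ 0})) := by
  have hp : ∀ (m : Multiset (HeightOneSpectrum (𝓞 L))), ∀ p ∈ m.map HeightOneSpectrum.asIdeal,
      Prime p := by
    intro m p hp
    obtain ⟨P, _, rfl⟩ := Multiset.mem_map.1 hp
    exact P.prime
  constructor
  · intro m m' h
    simp only [Subtype.mk.injEq] at h
    have h2 := congrArg UniqueFactorizationMonoid.normalizedFactors h
    rw [UniqueFactorizationMonoid.normalizedFactors_prod_of_prime (hp m),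
      UniqueFactorizationMonoid.normalizedFactors_prod_of_prime (hp m')] at h2
    exact Multiset.map_injective (fun a b hab => HeightOneSpectrum.ext hab) h2
  · rintro ⟨I, hI⟩
    have h1 : ∀ p ∈ UniqueFactorizationMonoid.normalizedFactors I, Prime p := fun p hp =>
      UniqueFactorizationMonoid.prime_of_normalized_factor p hp
    refine ⟨(UniqueFactorizationMonoid.normalizedFactors I).pmap
      (fun p (hp : Prime p) => ⟨p, Ideal.isPrime_of_prime hp, hp.ne_zero⟩) h1, ?_⟩
    simp only [Subtype.mk.injEq, Multiset.map_pmap, Multiset.pmap_eq_map, Multiset.map_id']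
    exact associated_iff_eq.1 (UniqueFactorizationMonoid.prod_normalizedFactors hI)

noncomputable def zterm (L : Type*) [Field L] [NumberField L] (s : ℝ) (n : ℕ) : ℝ :=
  if n = 0 then 0 else (Nat.card {I : Ideal (𝓞 L) // Ideal.absNorm I = n} : ℝ) * (n : ℝ) ^ (-s)

theorem Zet_eq (L : Type*) [Field L] [NumberField L] (s : ℝ) :
    Zet L s = ∑' n, ENNReal.ofReal (zterm L s n) := by
  unfold Zet msz
  have key : ∀ m : Multiset (HeightOneSpectrum (𝓞 L)),
      (m.map (fun P => ENNReal.ofReal ((Ideal.absNorm P.asIdeal : ℝ) ^ (-s)))).prod =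
      ENNReal.ofReal ((Ideal.absNorm (m.map HeightOneSpectrum.asIdeal).prod : ℝ) ^ (-s)) := by
    intro m
    induction m using Multiset.induction_on with
    | empty => simp
    | cons a m ih =>
      rw [Multiset.map_cons, Multiset.prod_cons, ih, ← ENNReal.ofReal_mul (by positivity),
        ← Real.mul_rpow (by positivity) (by positivity)]
      simp
  simp_rw [key]
  have h2 := (Equiv.ofBijective _ (hos_prod_bij L)).tsum_eq
    (fun I => ENNReal.ofReal ((Ideal.absNorm I.1 : ℝ) ^ (-s)))
  simp only [Equiv.ofBijective_apply] at h2
  rw [h2, ← (Equiv.sigmaFiberEquiv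
    (fun I : {I : Ideal (𝓞 L) // I ≠ 0} => Ideal.absNorm I.1)).tsum_eq, ENNReal.tsum_sigma']
  refine tsum_congr fun n => ?_
  have h3 : ∀ x : {x : {I : Ideal (𝓞 L) // I ≠ 0} // Ideal.absNorm x.1 = n},
      ENNReal.ofReal ((Ideal.absNorm ((Equiv.sigmaFiberEquiv
        (fun I : {I : Ideal (𝓞 L) // I ≠ 0} => Ideal.absNorm I.1)) ⟨n, x⟩).1 : ℝ) ^ (-s)) =
      ENNReal.ofReal ((n : ℝ) ^ (-s)) := by
    rintro ⟨x, rfl⟩; rfl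
  rw [tsum_congr h3, ENNReal.tsum_const]
  unfold zterm
  split_ifs with hn
  · subst hn
    have : IsEmpty {x : {I : Ideal (𝓞 L) // I ≠ 0} // Ideal.absNorm x.1 = 0} := by
      constructor
      rintro ⟨⟨I, hI⟩, h⟩
      exact hI (Ideal.absNorm_eq_zero_iff.1 h)
    simp only [Nat.cast_zero, ENNReal.ofReal_zero, mul_eq_zero]
    left
    simpa using (ENat.card_eq_zero_iff_empty _).2 this
  · let e : {x : {I : Ideal (𝓞 L) // I ≠ 0} // Ideal.absNorm x.1 = n} ≃
        {I : Ideal (𝓞 L) // Ideal.absNorm I = n} :=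
      { toFun := fun x => ⟨x.1.1, x.2⟩
        invFun := fun x => ⟨⟨x.1, by
          rintro h
          have := x.2
          rw [h] at this
          simp at this
          exact hn this.symm⟩, x.2⟩
        left_inv := fun x => rfl
        right_inv := fun x => rfl }
    have hfin : Finite {I : Ideal (𝓞 L) // Ideal.absNorm I = n} :=
      (Ideal.finite_setOfPred_absNorm_eq n).to_subtype
    rw [ENat.card_congr e, ENat.card_eq_coe_natCard, ENNReal.ofReal_mul (by positivity)]
    simp

theorem Zet_tendsto (L : Type*) [Field L] [NumberField L] :
    Tendsto (fun s : ℝ => ENNReal.ofReal (s - 1) * Zet L s) (𝓝[>] 1)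
      (𝓝 (ENNReal.ofReal (dedekindZeta_residue L))) := by
  have hz : ∀ s : ℝ, 1 < s → dedekindZeta L s = ((∑' n, zterm L s n : ℝ) : ℂ) := by
    intro s hs
    rw [Complex.ofReal_tsum]
    unfold dedekindZeta LSeries
    refine tsum_congr fun n => ?_
    unfold zterm LSeries.term
    split_ifs with hn
    · simp
    · push_cast
      rw [Complex.ofReal_cpow (by positivity)]
      push_cast
      rw [Complex.cpow_neg, div_eq_mul_inv]
  have ht := tendsto_sub_one_mul_dedekindZeta_nhdsGT L
  have ht2 : Tendsto (fun s : ℝ => (s - 1) * ∑' n, zterm L s n) (𝓝[>] 1)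
      (𝓝 (dedekindZeta_residue L)) := by
    have := (Complex.continuous_re.tendsto _).comp ht
    simp only [Complex.ofReal_re] at this
    refine this.congr' ?_
    filter_upwards [self_mem_nhdsWithin] with s hs
    simp only [Function.comp]
    rw [hz s hs, ← Complex.ofReal_one, ← Complex.ofReal_sub, ← Complex.ofReal_mul,
      Complex.ofReal_re]
  refine ((ENNReal.continuous_ofReal.tendsto _).comp ht2).congr' ?_
  filter_upwards [self_mem_nhdsWithin,
    ht2.eventually (lt_mem_nhds (dedekindZeta_residue_pos L))] with s hs hpos
  have hsum : Summable (zterm L s) := by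
    by_contra h
    rw [tsum_eq_zero_of_not_summable h] at hpos
    simp at hpos
  have hs' : (0:ℝ) ≤ s - 1 := by
    have : (1:ℝ) < s := hs
    linarith
  rw [Function.comp, ENNReal.ofReal_mul hs', Zet_eq, ENNReal.ofReal_tsum_of_nonneg _ hsum]
  intro n
  unfold zterm
  split_ifs <;> positivity

end

section
open NumberField IsDedekindDomain Filter Topology

theorem hos_two_le (L : Type*) [Field L] [NumberField L] (P : HeightOneSpectrum (𝓞 L)) :
    2 ≤ Ideal.absNorm P.asIdeal := by
  have h0 : Ideal.absNorm P.asIdeal ≠ 0 := by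
    rw [Ne, Ideal.absNorm_eq_zero_iff]; exact P.ne_bot
  have h1 : Ideal.absNorm P.asIdeal ≠ 1 := by
    rw [Ne, Ideal.absNorm_eq_one_iff]; exact P.isPrime.ne_top
  omega

theorem zeta_contra (L L' : Type*) [Field L] [NumberField L] [Field L'] [NumberField L']
    (H : Set (HeightOneSpectrum (𝓞 L)))
    (hH : ∑' P : H, ((Ideal.absNorm P.1.asIdeal : ℝ≥0∞))⁻¹ ≠ ⊤)
    (i : ((Hᶜ : Set (HeightOneSpectrum (𝓞 L))) ⊕ (Hᶜ : Set (HeightOneSpectrum (𝓞 L)))) →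
      HeightOneSpectrum (𝓞 L')) (hi : Function.Injective i)
    (hN : ∀ t, Ideal.absNorm (i t).asIdeal =
      Ideal.absNorm (Sum.elim (fun P => P.1.asIdeal) (fun P => P.1.asIdeal) t : Ideal (𝓞 L))) :
    False := by
  set ZH : ℝ≥0∞ := msz (fun P : H => ((Ideal.absNorm P.1.asIdeal : ℝ≥0∞))⁻¹) with hZH
  have hZHtop : ZH < ⊤ := by
    refine msz_lt_top _ (fun P => ?_) hH
    rw [ENNReal.inv_lt_one]
    exact_mod_cast hos_two_le L P.1
  have hle : ∀ s : ℝ, 1 < s → (Zet L s) ^ 2 ≤ ZH ^ 2 * Zet L' s := by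
    intro s hs
    set G : ℝ≥0∞ := msz (fun P : (Hᶜ : Set (HeightOneSpectrum (𝓞 L))) =>
      ENNReal.ofReal ((Ideal.absNorm P.1.asIdeal : ℝ) ^ (-s)))
    have h1 : Zet L s ≤ ZH * G := by
      refine (msz_le_split _ H).trans ?_
      gcongr
      refine msz_mono_inj _ _ id Function.injective_id fun P => ?_
      have h2 : (2:ℝ) ≤ Ideal.absNorm P.1.asIdeal := by exact_mod_cast hos_two_le L P.1
      have : (Ideal.absNorm P.1.asIdeal : ℝ) ^ (-s) ≤ (Ideal.absNorm P.1.asIdeal : ℝ)⁻¹ := by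
        rw [← Real.rpow_neg_one]
        exact Real.rpow_le_rpow_of_exponent_le (by linarith) (by linarith)
      refine (ENNReal.ofReal_le_ofReal this).trans ?_
      rw [ENNReal.ofReal_inv_of_pos (by linarith)]
      simp
    have h2 : G ^ 2 ≤ Zet L' s := by
      rw [sq, ← msz_sum]
      refine msz_mono_inj _ _ i hi fun t => ?_
      rw [hN t]
      rcases t with t | t <;> exact le_rfl
    calc (Zet L s) ^ 2 ≤ (ZH * G) ^ 2 := by gcongr
      _ = ZH ^ 2 * G ^ 2 := by ring
      _ ≤ _ := by gcongr
  have hlim1 := (Zet_tendsto L)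
  have hlim2 := (Zet_tendsto L')
  have hr := dedekindZeta_residue_pos L
  have h0 : Tendsto (fun s : ℝ => ENNReal.ofReal (s - 1)) (𝓝[>] 1) (𝓝 0) := by
    have : Tendsto (fun s : ℝ => ENNReal.ofReal (s - 1)) (𝓝 1) (𝓝 (ENNReal.ofReal (1 - 1))) :=
      (ENNReal.continuous_ofReal.comp (continuous_id.sub continuous_const)).tendsto 1
    simp at this
    exact this.mono_left nhdsWithin_le_nhds
  have hR : Tendsto (fun s : ℝ => ZH ^ 2 * (ENNReal.ofReal (s - 1) *
      (ENNReal.ofReal (s - 1) * Zet L' s))) (𝓝[>] 1) (𝓝 (ZH ^ 2 * (0 *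
        ENNReal.ofReal (dedekindZeta_residue L')))) := by
    refine ENNReal.Tendsto.const_mul (ENNReal.Tendsto.mul h0 (Or.inr ENNReal.ofReal_ne_top) hlim2
      (Or.inr ENNReal.zero_ne_top)) (Or.inr (by finiteness))
  have hL : Tendsto (fun s : ℝ => (ENNReal.ofReal (s - 1) * Zet L s) ^ 2) (𝓝[>] 1)
      (𝓝 (ENNReal.ofReal (dedekindZeta_residue L) ^ 2)) :=
    ENNReal.Tendsto.pow hlim1
  have := le_of_tendsto_of_tendsto hL hR (by
    filter_upwards [self_mem_nhdsWithin] with s hs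
    calc (ENNReal.ofReal (s - 1) * Zet L s) ^ 2 = ENNReal.ofReal (s - 1) ^ 2 * Zet L s ^ 2 := by
          ring
      _ ≤ ENNReal.ofReal (s - 1) ^ 2 * (ZH ^ 2 * Zet L' s) := by gcongr; exact hle s hs
      _ = _ := by ring)
  simp at this
  linarith

theorem split_primes (L L' : Type*) [Field L] [NumberField L] [Field L'] [NumberField L']
    [Algebra L L'] (hfr : Module.finrank L L' = 2) (α : 𝓞 L) (β : L')
    (hβ : β ^ 2 = algebraMap L L' α) (σ : L' ≃ₐ[L] L') (hσ : σ β = -β)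
    (P : HeightOneSpectrum (𝓞 L)) (h2 : 2 * α ∉ P.asIdeal) (s : 𝓞 L) (hs : α - s ^ 2 ∈ P.asIdeal) :
    ∃ Q Q' : HeightOneSpectrum (𝓞 L'), Q ≠ Q' ∧
      Q.asIdeal.comap (algebraMap (𝓞 L) (𝓞 L')) = P.asIdeal ∧
      Q'.asIdeal.comap (algebraMap (𝓞 L) (𝓞 L')) = P.asIdeal ∧
      Ideal.absNorm Q.asIdeal = Ideal.absNorm P.asIdeal ∧
      Ideal.absNorm Q'.asIdeal = Ideal.absNorm P.asIdeal := by
  have hPm : P.asIdeal.IsMaximal := P.isMaximal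
  have hβi : IsIntegral ℤ β := by
    refine IsIntegral.of_pow (n := 2) (by norm_num) ?_
    rw [hβ]
    exact map_isIntegral_int (algebraMap L L') (RingOfIntegers.isIntegral_coe α)
  let b : 𝓞 L' := ⟨β, hβi⟩
  have hb : b ^ 2 = algebraMap (𝓞 L) (𝓞 L') α := by
    ext
    exact hβ
  let τ : 𝓞 L' ≃+* 𝓞 L' := RingOfIntegers.mapRingEquiv σ
  have hτb : τ b = -b := by
    ext
    exact hσ
  have hτa : ∀ x : 𝓞 L, τ (algebraMap (𝓞 L) (𝓞 L') x) = algebraMap (𝓞 L) (𝓞 L') x := by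
    intro x
    ext
    exact σ.commutes (x : L)
  obtain ⟨Q, hQ⟩ := (Ideal.nonempty_primesOver (S := 𝓞 L') (P := P.asIdeal))
  have hQp : Q.IsPrime := hQ.1
  have hQo : Q.LiesOver P.asIdeal := hQ.2
  have hQc : Q.comap (algebraMap (𝓞 L) (𝓞 L')) = P.asIdeal := hQo.over.symm
  let Q' := Q.comap τ.toRingHom
  have hQ'p : Q'.IsPrime := Ideal.comap_isPrime _ _
  have hQ'c : Q'.comap (algebraMap (𝓞 L) (𝓞 L')) = P.asIdeal := by
    rw [← hQc]
    ext x
    simp only [Q', Ideal.mem_comap]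
    show τ (algebraMap (𝓞 L) (𝓞 L') x) ∈ Q ↔ _
    rw [hτa]
  have hQ'o : Q'.LiesOver P.asIdeal := ⟨hQ'c.symm⟩
  have hQ0 : Q ≠ ⊥ := Ideal.ne_bot_of_liesOver_of_ne_bot P.ne_bot Q
  have hQ'0 : Q' ≠ ⊥ := Ideal.ne_bot_of_liesOver_of_ne_bot P.ne_bot Q'
  have hne : Q ≠ Q' := by
    intro heq
    have hmem : (b - algebraMap (𝓞 L) (𝓞 L') s) * (b + algebraMap (𝓞 L) (𝓞 L') s) ∈ Q := by
      have : (b - algebraMap (𝓞 L) (𝓞 L') s) * (b + algebraMap (𝓞 L) (𝓞 L') s) =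
          algebraMap (𝓞 L) (𝓞 L') (α - s ^ 2) := by
        rw [map_sub, ← hb, map_pow]; ring
      rw [this, ← Ideal.mem_comap, hQc]
      exact hs
    have h3 : algebraMap (𝓞 L) (𝓞 L') (2 * s) ∈ Q := by
      rcases hQp.mem_or_mem hmem with h | h
      · have h' : b - algebraMap (𝓞 L) (𝓞 L') s ∈ Q' := heq ▸ h
        have h'' : τ (b - algebraMap (𝓞 L) (𝓞 L') s) ∈ Q := h'
        rw [map_sub, hτb, hτa] at h''
        have := Q.neg_mem (Q.add_mem h h'')
        convert this using 1
        rw [two_mul, map_add]; ring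
      · have h' : b + algebraMap (𝓞 L) (𝓞 L') s ∈ Q' := heq ▸ h
        have h'' : τ (b + algebraMap (𝓞 L) (𝓞 L') s) ∈ Q := h'
        rw [map_add, hτb, hτa] at h''
        have := (Q.add_mem h h'')
        convert this using 1
        rw [two_mul, map_add]; ring
    rw [← Ideal.mem_comap, hQc] at h3
    apply h2
    have : 2 * α = 2 * (α - s ^ 2) + s * (2 * s) := by ring
    rw [this]
    exact P.asIdeal.add_mem (P.asIdeal.mul_mem_left _ hs) (P.asIdeal.mul_mem_left _ h3)
  have hsum := Ideal.sum_ramification_inertia (𝓞 L') L L' (p := P.asIdeal) P.ne_bot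
  rw [hfr] at hsum
  have hQm : Q ∈ IsDedekindDomain.primesOverFinset P.asIdeal (𝓞 L') :=
    (IsDedekindDomain.mem_primesOverFinset_iff P.ne_bot _).mpr ⟨hQp, hQo⟩
  have hQ'm : Q' ∈ IsDedekindDomain.primesOverFinset P.asIdeal (𝓞 L') :=
    (IsDedekindDomain.mem_primesOverFinset_iff P.ne_bot _).mpr ⟨hQ'p, hQ'o⟩
  have hle : ∑ R ∈ ({Q, Q'} : Finset (Ideal (𝓞 L'))), Ideal.ramificationIdx' P.asIdeal R *
      Ideal.inertiaDeg' P.asIdeal R ≤ 2 := by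
    rw [← hsum]
    refine Finset.sum_le_sum_of_subset ?_
    intro R hR
    simp at hR
    rcases hR with rfl | rfl <;> assumption
  rw [Finset.sum_pair hne] at hle
  have e1 := Ideal.IsDedekindDomain.ramificationIdx'_ne_zero_of_liesOver Q (p := P.asIdeal) P.ne_bot
  have e2 := Ideal.IsDedekindDomain.ramificationIdx'_ne_zero_of_liesOver Q' (p := P.asIdeal) P.ne_bot
  have f1 := Ideal.inertiaDeg'_ne_zero P.asIdeal Q
  have f2 := Ideal.inertiaDeg'_ne_zero P.asIdeal Q'
  have g1 : Ideal.inertiaDeg' P.asIdeal Q = 1 := by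
    have h1 : Ideal.inertiaDeg' P.asIdeal Q ≤
      Ideal.ramificationIdx' P.asIdeal Q * Ideal.inertiaDeg' P.asIdeal Q :=
      Nat.le_mul_of_pos_left _ (Nat.pos_of_ne_zero e1)
    have h2 : 0 < Ideal.ramificationIdx' P.asIdeal Q' * Ideal.inertiaDeg' P.asIdeal Q' :=
      Nat.mul_pos (Nat.pos_of_ne_zero e2) (Nat.pos_of_ne_zero f2)
    omega
  have g2 : Ideal.inertiaDeg' P.asIdeal Q' = 1 := by
    have h1 : Ideal.inertiaDeg' P.asIdeal Q' ≤
      Ideal.ramificationIdx' P.asIdeal Q' * Ideal.inertiaDeg' P.asIdeal Q' :=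
      Nat.le_mul_of_pos_left _ (Nat.pos_of_ne_zero e2)
    have h2 : 0 < Ideal.ramificationIdx' P.asIdeal Q * Ideal.inertiaDeg' P.asIdeal Q :=
      Nat.mul_pos (Nat.pos_of_ne_zero e1) (Nat.pos_of_ne_zero f1)
    omega
  refine ⟨⟨Q, hQp, hQ0⟩, ⟨Q', hQ'p, hQ'0⟩, ?_, hQc, hQ'c, ?_, ?_⟩
  · intro h
    exact hne (congrArg HeightOneSpectrum.asIdeal h)
  · show Ideal.absNorm Q = _
    rw [Ideal.absNorm_eq_pow_inertiaDeg'_of_liesOver Q P.asIdeal, g1, pow_one]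
    · exact P.isPrime
    · exact P.ne_bot
  · show Ideal.absNorm Q' = _
    rw [Ideal.absNorm_eq_pow_inertiaDeg'_of_liesOver Q' P.asIdeal, g2, pow_one]
    · exact P.isPrime
    · exact P.ne_bot


open Polynomial in
theorem exists_quad_ext.{u} (L : Type u) [Field L] [NumberField L] (α : L) (hα : ¬ IsSquare α) :
    ∃ (L' : Type u) (_ : Field L') (_ : NumberField L') (_ : Algebra L L') (β : L')
      (σ : L' ≃ₐ[L] L'), Module.finrank L L' = 2 ∧ β ^ 2 = algebraMap L L' α ∧ σ β = -β := by
  let q : L[X] := X ^ 2 - C α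
  have hq : Irreducible q := by
    refine Polynomial.irreducible_of_degree_le_three_of_not_isRoot ?_ ?_
    · simp only [q]
      rw [natDegree_X_pow_sub_C]; simp
    · intro x hx
      apply hα
      simp [q, sub_eq_zero] at hx
      exact ⟨x, by rw [← hx, sq]⟩
  have hqm : q.Monic := monic_X_pow_sub_C α (by norm_num)
  haveI : Fact (Irreducible q) := ⟨hq⟩
  have hfin : Module.Finite L (AdjoinRoot q) := (AdjoinRoot.powerBasis hq.ne_zero).finite
  have hroot : (AdjoinRoot.root q) ^ 2 = algebraMap L (AdjoinRoot q) α := by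
    have := AdjoinRoot.eval₂_root q
    simp [q, eval₂_sub, sub_eq_zero] at this
    exact this
  let φ : AdjoinRoot q →ₐ[L] AdjoinRoot q := AdjoinRoot.liftAlgHom q (Algebra.ofId L _)
    (-AdjoinRoot.root q) (by
      simp only [q, eval₂_sub, eval₂_X_pow, eval₂_C, neg_sq, hroot]
      exact sub_self _)
  refine ⟨AdjoinRoot q, inferInstance, NumberField.of_module_finite L _, inferInstance,
    AdjoinRoot.root q, AlgEquiv.ofBijective φ (Algebra.IsAlgebraic.algHom_bijective φ), ?_, hroot, ?_⟩
  · rw [(AdjoinRoot.powerBasis hq.ne_zero).finrank, AdjoinRoot.powerBasis_dim]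
    exact natDegree_X_pow_sub_C
  · simp [φ]

theorem key_nonsquare (L : Type*) [Field L] [NumberField L] (α : 𝓞 L) (hα : ¬ IsSquare (α : L))
    (H : Set (HeightOneSpectrum (𝓞 L)))
    (hH : ∑' P : H, ((Ideal.absNorm P.1.asIdeal : ℝ≥0∞))⁻¹ ≠ ⊤)
    (h : ∀ P ∉ H, 2 * α ∉ P.asIdeal ∧ ∃ s : 𝓞 L, α - s ^ 2 ∈ P.asIdeal) : False := by
  obtain ⟨L', _, _, _, β, σ, hfr, hβ, hσ⟩ := exists_quad_ext L α hα
  have key : ∀ P : (Hᶜ : Set (HeightOneSpectrum (𝓞 L))), _ := fun P =>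
    split_primes L L' hfr α β hβ σ hσ P.1 (h P.1 P.2).1 _ (h P.1 P.2).2.choose_spec
  choose Q Q' h1 h2 h3 h4 h5 using key
  refine zeta_contra L L' H hH (Sum.elim Q Q') ?_ ?_
  · rintro (P | P) (R | R) hPR
    · have := h2 P
      simp only [Sum.elim_inl] at hPR
      rw [hPR, h2 R] at this
      rw [Subtype.ext (HeightOneSpectrum.ext this)]
    · have := h2 P
      simp only [Sum.elim_inl, Sum.elim_inr] at hPR
      rw [hPR, h3 R] at this
      have hRP := Subtype.ext (HeightOneSpectrum.ext this)
      subst hRP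
      exact absurd hPR (h1 _)
    · have := h3 P
      simp only [Sum.elim_inl, Sum.elim_inr] at hPR
      rw [hPR, h2 R] at this
      have hRP := Subtype.ext (HeightOneSpectrum.ext this)
      subst hRP
      exact absurd hPR.symm (h1 _)
    · have := h3 P
      simp only [Sum.elim_inr] at hPR
      rw [hPR, h3 R] at this
      rw [Subtype.ext (HeightOneSpectrum.ext this)]
  · rintro (P | P)
    · exact h4 P
    · exact h5 P

end

section PartD

theorem finite_mod_two {M : Type*} [AddCommGroup M] [Module.Finite ℤ M] :
    ∃ E : Finset M, ∀ u : M, ∃ e ∈ E, ∃ x : M, u = e + (2 : ℤ) • x := by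
  classical
  obtain ⟨s, hs⟩ := (Module.Finite.fg_top : (⊤ : Submodule ℤ M).FG)
  refine ⟨s.powerset.image (fun t => ∑ i ∈ t, i), fun u => ?_⟩
  have hu : u ∈ Submodule.span ℤ (s : Set M) := by rw [hs]; trivial
  obtain ⟨c, -, hc⟩ := Submodule.mem_span_finset.mp hu
  refine ⟨∑ i ∈ s.filter (fun i => c i % 2 = 1), i, Finset.mem_image.mpr ⟨_, by simp, rfl⟩,
    ∑ i ∈ s, (c i / 2) • i, ?_⟩
  rw [← hc, Finset.sum_filter, Finset.smul_sum, ← Finset.sum_add_distrib]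
  refine Finset.sum_congr rfl fun i _ => ?_
  rw [smul_smul]
  split_ifs with h
  · conv_lhs => rw [← Int.emod_add_mul_ediv (c i) 2, add_smul, h, one_smul]
  · have h0 : c i % 2 = 0 := by omega
    conv_lhs => rw [← Int.emod_add_mul_ediv (c i) 2, add_smul, h0, zero_smul]

theorem units_finite (K : Type*) [Field K] [NumberField K]
    (S : Finset (HeightOneSpectrum (𝓞 K))) : Module.Finite ℤ (Additive (SInt K S)ˣ) := by
  let j : (SInt K S)ˣ →* Kˣ := Units.map (algebraMap (SInt K S) K : SInt K S →* K)
  let ψ : ∀ v : S, Additive (SInt K S)ˣ →+ ℤ := fun v =>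
    AddMonoidHom.comp (MonoidHom.toAdditiveLeft
      ((HeightOneSpectrum.valuationOfNeZero (K := K) v.1).comp j)) (AddMonoidHom.id _)
  let Φ : Additive (SInt K S)ˣ →ₗ[ℤ] (S → ℤ) := LinearMap.pi fun v => (ψ v).toIntLinearMap
  let ι : Additive (𝓞 K)ˣ →ₗ[ℤ] Additive (SInt K S)ˣ :=
    (MonoidHom.toAdditive (Units.map (algebraMap (𝓞 K) (SInt K S) : 𝓞 K →* SInt K S))).toIntLinearMap
  have hker : LinearMap.ker Φ ≤ LinearMap.range ι := by
    intro x hx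
    let u : (SInt K S)ˣ := x.toMul
    have hv1 : ∀ v ∈ S, HeightOneSpectrum.valuationOfNeZero (K := K) v (j u) = 1 := by
      intro v hv
      have := congrFun (LinearMap.mem_ker.mp hx) ⟨v, hv⟩
      exact this
    have hval : ∀ u : (SInt K S)ˣ, (∀ v ∈ S, v.valuation K (j u : K) ≤ 1) →
        ∃ y : 𝓞 K, algebraMap (𝓞 K) K y = (u : SInt K S) := by
      intro u hu
      refine HeightOneSpectrum.mem_integers_of_valuation_le_one K _ fun v => ?_
      by_cases hv : v ∈ S
      · exact hu v hv
      · exact u.1.2 v (by simpa using hv)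
    obtain ⟨y, hy⟩ := hval u (fun v hv => by
      rw [← HeightOneSpectrum.valuationOfNeZero_eq, hv1 v hv]; exact le_rfl)
    obtain ⟨z, hz⟩ := hval u⁻¹ (fun v hv => by
      rw [← HeightOneSpectrum.valuationOfNeZero_eq, map_inv, map_inv, hv1 v hv, inv_one]
      exact le_rfl)
    have hyz : y * z = 1 := by
      apply FaithfulSMul.algebraMap_injective (𝓞 K) K
      rw [map_mul, hy, hz, map_one]
      have := u.mul_inv
      exact congrArg Subtype.val this
    refine ⟨Additive.ofMul ⟨y, z, hyz, by rw [mul_comm, hyz]⟩, ?_⟩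
    apply Additive.toMul.injective
    ext
    exact hy
  have h1 : Module.Finite ℤ (LinearMap.ker Φ) := by
    have : Module.Finite ℤ (LinearMap.range ι) := inferInstance
    have hn : IsNoetherian ℤ (LinearMap.range ι) := isNoetherian_of_isNoetherianRing_of_finite _ _
    have := isNoetherian_of_le hker
    infer_instance
  have h2 : Module.Finite ℤ (Additive (SInt K S)ˣ ⧸ LinearMap.ker Φ) :=
    Module.Finite.equiv (LinearMap.quotKerEquivRange Φ).symm
  exact Module.Finite.of_submodule_quotient (LinearMap.ker Φ)

theorem units_mod_sq (K : Type*) [Field K] [NumberField K]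
    (S : Finset (HeightOneSpectrum (𝓞 K))) :
    ∃ E : Finset (SInt K S)ˣ, ∀ u : (SInt K S)ˣ, ∃ e ∈ E, ∃ x : (SInt K S)ˣ, u = e * x ^ 2 := by
  have := units_finite K S
  obtain ⟨E, hE⟩ := finite_mod_two (M := Additive (SInt K S)ˣ)
  exact ⟨E, fun u => by
    obtain ⟨e, he, x, hx⟩ := hE (Additive.ofMul u)
    exact ⟨e.toMul, he, x.toMul, by exact_mod_cast hx⟩⟩

end PartD

section PartE

theorem lin_step {K : Type*} [Field K] (f A B p : K[X]) (ε : K)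
    (hodd : Odd f.natDegree) (hA : A ≠ 0) (hcop : IsCoprime A f)
    (hAB : A ∣ B ^ 2 - f) (hε : ε ≠ 0) (hp : f ∣ C ε * A - p ^ 2) :
    ∃ u v w : K[X], w ≠ 0 ∧ u ^ 2 - f * v ^ 2 = C ε * A * w ^ 2 := by
  have hf0 : f ≠ 0 := by rintro rfl; simp at hodd
  set n := f.natDegree with hn
  set a := A.natDegree with ha
  let dU := (n + a + 1) / 2
  let dV := (a + 1) / 2
  let dW := (n + 1) / 2
  let Φ : (degreeLT K dU × degreeLT K dV × degreeLT K dW) →ₗ[K] (AdjoinRoot A × AdjoinRoot f) :=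
    { toFun := fun x => (AdjoinRoot.mk A (x.1.1 - B * x.2.1.1), AdjoinRoot.mk f (x.1.1 - p * x.2.2.1))
      map_add' := fun x y => by
        simp only [Prod.fst_add, Prod.snd_add, Submodule.coe_add, Prod.mk_add_mk, ← map_add]
        congr 2 <;> ring
      map_smul' := fun c x => by
        simp only [Prod.smul_fst, Prod.smul_snd, Submodule.coe_smul, RingHom.id_apply, Prod.smul_mk,
          AdjoinRoot.smul_mk, smul_sub, mul_smul_comm] }
  have hfA : Module.Finite K (AdjoinRoot A) := (AdjoinRoot.powerBasis hA).finite
  have hff : Module.Finite K (AdjoinRoot f) := (AdjoinRoot.powerBasis hf0).finite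
  have hker : LinearMap.ker Φ ≠ ⊥ := by
    apply LinearMap.ker_ne_bot_of_finrank_lt
    have e : ∀ d, Module.finrank K (degreeLT K d) = d := fun d => by
      rw [LinearEquiv.finrank_eq (degreeLTEquiv K d)]; simp
    have hd : ∀ d, Module.Finite K (degreeLT K d) := fun d =>
      Module.Finite.equiv (degreeLTEquiv K d).symm
    rw [Module.finrank_prod, Module.finrank_prod, Module.finrank_prod, e, e, e,
      (AdjoinRoot.powerBasis hA).finrank, (AdjoinRoot.powerBasis hf0).finrank,
      AdjoinRoot.powerBasis_dim, AdjoinRoot.powerBasis_dim]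
    simp only [dU, dV, dW]
    obtain ⟨k, hk⟩ := hodd
    omega
  obtain ⟨⟨⟨u, hu⟩, ⟨v, hv⟩, ⟨w, hw⟩⟩, hx, hx0⟩ := (Submodule.ne_bot_iff _).mp hker
  rw [LinearMap.mem_ker] at hx
  have h1 : A ∣ u - B * v := by
    rw [← AdjoinRoot.mk_eq_zero]; exact congrArg Prod.fst hx
  have h2 : f ∣ u - p * w := by
    rw [← AdjoinRoot.mk_eq_zero]; exact congrArg Prod.snd hx
  have hφA : A ∣ u ^ 2 - f * v ^ 2 - C ε * A * w ^ 2 := by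
    have : u ^ 2 - f * v ^ 2 - C ε * A * w ^ 2 = (u - B * v) * (u + B * v) + (B ^ 2 - f) * v ^ 2
      - A * (C ε * w ^ 2) := by ring
    rw [this]
    exact dvd_sub (dvd_add (h1.mul_right _) (hAB.mul_right _)) (dvd_mul_right _ _)
  have hφf : f ∣ u ^ 2 - f * v ^ 2 - C ε * A * w ^ 2 := by
    have : u ^ 2 - f * v ^ 2 - C ε * A * w ^ 2 = (u - p * w) * (u + p * w) - (C ε * A - p ^ 2) * w ^ 2
      - f * (v ^ 2) := by ring
    rw [this]
    exact dvd_sub (dvd_sub (h2.mul_right _) (hp.mul_right _)) (dvd_mul_right _ _)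
  have hφ := hcop.mul_dvd hφA hφf
  have hnpos : 0 < n := hodd.pos
  have hdeg : (u ^ 2 - f * v ^ 2 - C ε * A * w ^ 2).degree < (A * f).degree := by
    have hAf : (A * f).degree = ((n + a : ℕ) : WithBot ℕ) := by
      rw [degree_mul, degree_eq_natDegree hA, degree_eq_natDegree hf0, ← hn, ← ha, add_comm]; rfl
    rw [mem_degreeLT] at hu hv hw
    rw [hAf]
    have key : ∀ (q r : K[X]) (d : ℕ), r.degree < (d : WithBot ℕ) →
        q.natDegree + 2 * d ≤ n + a + 1 → (q * r ^ 2).degree < ((n + a : ℕ) : WithBot ℕ) := by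
      intro q r d hr hd
      by_cases hq0 : q * r ^ 2 = 0
      · rw [hq0, degree_zero]; exact WithBot.bot_lt_coe _
      · rw [degree_eq_natDegree hq0]
        have hr0 : r ≠ 0 := by rintro rfl; simp at hq0
        rw [degree_eq_natDegree hr0] at hr
        have hr' : r.natDegree < d := by exact_mod_cast hr
        have := natDegree_mul_le (p := q) (q := r ^ 2)
        rw [natDegree_pow] at this
        have : (q * r ^ 2).natDegree < n + a := by omega
        exact_mod_cast this
    refine ((degree_sub_le _ _).trans_lt (max_lt ?_ ?_))
    · refine ((degree_sub_le _ _).trans_lt (max_lt ?_ ?_))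
      · have := key 1 u dU hu (by simp only [natDegree_one, dU]; omega)
        simpa using this
      · exact key f v dV hv (by simp only [dV]; omega)
    · refine key (C ε * A) w dW hw ?_
      rw [natDegree_C_mul hε]
      simp only [dW]; omega
  have hz : u ^ 2 - f * v ^ 2 - C ε * A * w ^ 2 = 0 :=
    eq_zero_of_dvd_of_degree_lt hφ hdeg
  refine ⟨u, v, w, ?_, by linear_combination hz⟩
  rintro rfl
  have hz' : u ^ 2 = f * v ^ 2 := by linear_combination hz
  have hv0 : v = 0 := by
    by_contra hv0
    have := congrArg natDegree hz'
    rw [natDegree_pow, natDegree_mul hf0 (pow_ne_zero 2 hv0), natDegree_pow] at this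
    obtain ⟨k, hk⟩ := hodd
    omega
  have hu0 : u = 0 := by
    rw [hv0] at hz'; simpa using hz'
  apply hx0
  subst hv0 hu0
  rfl

theorem dvd_of_sq_dvd_sqfree {K : Type*} [Field K] (f t b : K[X]) (hf : Squarefree f)
    (h : t ^ 2 ∣ f * b ^ 2) (ht : t ≠ 0) : t ∣ b := by
  classical
  obtain ⟨t', ht'⟩ := EuclideanDomain.gcd_dvd_left t b
  obtain ⟨b', hb'⟩ := EuclideanDomain.gcd_dvd_right t b
  set g := EuclideanDomain.gcd t b with hg
  have hg0 : g ≠ 0 := by rintro h0; rw [h0] at ht'; simp at ht'; exact ht ht'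
  have hc : IsCoprime t' b' := by
    have := EuclideanDomain.gcd_eq_gcd_ab t b
    rw [← hg] at this
    refine ⟨EuclideanDomain.gcdA t b, EuclideanDomain.gcdB t b, ?_⟩
    apply mul_left_cancel₀ hg0
    linear_combination -this - EuclideanDomain.gcdA t b * ht' - EuclideanDomain.gcdB t b * hb'
  have h1 : t' ^ 2 ∣ f * b' ^ 2 := by
    rw [← mul_dvd_mul_iff_left (pow_ne_zero 2 hg0)]
    have e1 : t ^ 2 = g ^ 2 * t' ^ 2 := by rw [ht']; ring
    have e2 : f * b ^ 2 = g ^ 2 * (f * b' ^ 2) := by conv_lhs => rw [hb']; ring_nf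
                                                     ring
    rw [← e1, ← e2]; exact h
  have h2 : t' ^ 2 ∣ f := (hc.pow : IsCoprime (t' ^ 2) (b' ^ 2)).dvd_of_dvd_mul_right h1
  have h3 : IsUnit t' := hf t' (by rw [← sq]; exact h2)
  obtain ⟨s, hs⟩ := h3.exists_right_inv
  refine ⟨s * b', ?_⟩
  linear_combination hb' - g * b' * hs - s * b' * ht'

end PartE

section PartE2

noncomputable def hι (K : Type*) [Field K] (f : K[X]) : K[X] →+* HypRing K f :=
  (HypRing.mk K f).comp Polynomial.C

noncomputable def hY (K : Type*) [Field K] (f : K[X]) : HypRing K f := HypRing.mk K f X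

variable {K : Type*} [Field K] {f : K[X]}

theorem hY_sq : hY K f ^ 2 = hι K f f := by
  have : HypRing.mk K f ((X : Polynomial K[X]) ^ 2 - C f) = 0 := by
    apply Ideal.Quotient.eq_zero_iff_mem.mpr
    exact Ideal.subset_span rfl
  rw [map_sub, sub_eq_zero, map_pow] at this
  exact this

theorem hyp_monic : ((X : Polynomial K[X]) ^ 2 - C f).Monic := monic_X_pow_sub_C f (by norm_num)

theorem hyp_rep (x : HypRing K f) : ∃ a b : K[X], x = hι K f a + hι K f b * hY K f := by
  obtain ⟨P, rfl⟩ := Ideal.Quotient.mk_surjective x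
  have h := modByMonic_add_div P ((X : Polynomial K[X]) ^ 2 - C f)
  set R := P %ₘ ((X : Polynomial K[X]) ^ 2 - C f) with hR
  have hd : R.natDegree ≤ 1 := by
    have := natDegree_modByMonic_lt P (hyp_monic (f := f)) (by
      intro h1
      have := congrArg natDegree h1
      rw [natDegree_X_pow_sub_C] at this; simp at this)
    rw [natDegree_X_pow_sub_C, ← hR] at this
    omega
  refine ⟨R.coeff 0, R.coeff 1, ?_⟩
  have h0 : HypRing.mk K f ((X : Polynomial K[X]) ^ 2 - C f) = 0 := by
    rw [map_sub, map_pow]; exact sub_eq_zero.mpr hY_sq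
  show HypRing.mk K f P = _
  rw [← h, map_add, map_mul, h0, zero_mul, add_zero]
  conv_lhs => rw [eq_X_add_C_of_natDegree_le_one hd]
  rw [map_add, map_mul, add_comm]
  rfl

theorem hyp_unique {a b : K[X]} (h : hι K f a + hι K f b * hY K f = 0) : a = 0 ∧ b = 0 := by
  have h' : HypRing.mk K f (C a + C b * X) = 0 := by
    rw [map_add, map_mul]; exact h
  have h2 := Ideal.mem_span_singleton.mp (Ideal.Quotient.eq_zero_iff_mem.mp h')
  have h3 : C a + C b * X = 0 := by
    refine eq_zero_of_dvd_of_degree_lt h2 ?_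
    rw [degree_X_pow_sub_C (by norm_num), add_comm]
    exact (degree_linear_le).trans_lt (by norm_num)
  constructor
  · have := congrArg (fun q => coeff q 0) h3
    simpa using this
  · have := congrArg (fun q => coeff q 1) h3
    simpa [coeff_C] using this

noncomputable def hσ (K : Type*) [Field K] (f : K[X]) : HypRing K f →+* HypRing K f :=
  Ideal.Quotient.lift _ (eval₂RingHom (hι K f) (-hY K f)) (by
    intro a ha
    obtain ⟨c, rfl⟩ := Ideal.mem_span_singleton.mp ha
    rw [map_mul, map_sub, map_pow, coe_eval₂RingHom, eval₂_X, eval₂_C, neg_sq, hY_sq, sub_self,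
      zero_mul])

theorem hσ_ι (a : K[X]) : hσ K f (hι K f a) = hι K f a := by
  show Ideal.Quotient.lift _ _ _ (Ideal.Quotient.mk _ (C a)) = _
  rw [Ideal.Quotient.lift_mk, coe_eval₂RingHom, eval₂_C]

theorem hσ_Y : hσ K f (hY K f) = - hY K f := by
  show Ideal.Quotient.lift _ _ _ (Ideal.Quotient.mk _ X) = _
  rw [Ideal.Quotient.lift_mk, coe_eval₂RingHom, eval₂_X]

theorem hσσ (x : HypRing K f) : hσ K f (hσ K f x) = x := by
  obtain ⟨a, b, rfl⟩ := hyp_rep x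
  simp [hσ_ι, hσ_Y]

theorem hσ_surj : Function.Surjective (hσ K f) := fun x => ⟨hσ K f x, hσσ x⟩

theorem hyp_norm (a b : K[X]) : (hι K f a + hι K f b * hY K f) *
    hσ K f (hι K f a + hι K f b * hY K f) = hι K f (a ^ 2 - f * b ^ 2) := by
  simp only [map_add, map_mul, hσ_ι, hσ_Y, map_sub, map_pow]
  linear_combination (-(hι K f b) ^ 2) * (hY_sq (f := f))

theorem norm_ne_zero (hodd : Odd f.natDegree) {a b : K[X]} (h : a ^ 2 - f * b ^ 2 = 0) :
    a = 0 ∧ b = 0 := by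
  have hf0 : f ≠ 0 := by rintro rfl; simp at hodd
  have hz' : a ^ 2 = f * b ^ 2 := by linear_combination h
  have hv0 : b = 0 := by
    by_contra hv0
    have := congrArg natDegree hz'
    rw [natDegree_pow, natDegree_mul hf0 (pow_ne_zero 2 hv0), natDegree_pow] at this
    obtain ⟨k, hk⟩ := hodd
    omega
  exact ⟨by rw [hv0] at hz'; simpa using hz', hv0⟩

theorem hι_inj : Function.Injective (hι K f) := by
  rw [injective_iff_map_eq_zero]
  intro a ha
  exact (hyp_unique (f := f) (a := a) (b := 0) (by simp [ha])).1

theorem hι_mul_eq_zero {c : K[X]} (hc : c ≠ 0) {y : HypRing K f} (h : hι K f c * y = 0) : y = 0 := by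
  obtain ⟨a, b, rfl⟩ := hyp_rep y
  have : hι K f (c * a) + hι K f (c * b) * hY K f = 0 := by
    rw [map_mul, map_mul]; linear_combination h
  obtain ⟨h1, h2⟩ := hyp_unique this
  simp [hc] at h1 h2
  simp [h1, h2]

theorem hyp_exists_norm (hodd : Odd f.natDegree) {x : HypRing K f} (hx : x ≠ 0) :
    ∃ c : K[X], c ≠ 0 ∧ x * hσ K f x = hι K f c := by
  obtain ⟨a, b, rfl⟩ := hyp_rep x
  refine ⟨_, ?_, hyp_norm a b⟩
  intro h
  obtain ⟨rfl, rfl⟩ := norm_ne_zero hodd h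
  simp at hx

theorem hyp_domain (hodd : Odd f.natDegree) : IsDomain (HypRing K f) := by
  have : Nontrivial (HypRing K f) := hι_inj.nontrivial
  have : NoZeroDivisors (HypRing K f) := by
    constructor
    intro x y hxy
    by_cases hx : x = 0
    · exact Or.inl hx
    · right
      obtain ⟨c, hc, h⟩ := hyp_exists_norm hodd hx
      refine hι_mul_eq_zero hc ?_
      rw [← h]
      linear_combination hσ K f x * hxy
  exact NoZeroDivisors.to_isDomain _

theorem hyp_mul_conj [CharZero K] (hodd : Odd f.natDegree) (hf : Squarefree f)
    (I : Ideal (HypRing K f)) (hI : I ≠ ⊥) :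
    ∃ t : K[X], t ≠ 0 ∧ I * I.map (hσ K f) = Ideal.span {hι K f t} := by
  set D := I * I.map (hσ K f) with hD
  obtain ⟨t, ht⟩ := (IsPrincipalIdealRing.principal (D.comap (hι K f))).principal
  have htm : ∀ c, hι K f c ∈ D → t ∣ c := by
    intro c hc
    have : c ∈ D.comap (hι K f) := hc
    rw [ht] at this
    exact Ideal.mem_span_singleton.mp this
  have htD : hι K f t ∈ D := by
    have : t ∈ D.comap (hι K f) := by rw [ht]; exact Ideal.mem_span_singleton_self t
    exact this
  have hmem : ∀ x ∈ I, ∀ y ∈ I, x * hσ K f y ∈ D := fun x hx y hy =>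
    Ideal.mul_mem_mul hx (Ideal.mem_map_of_mem _ hy)
  have ht0 : t ≠ 0 := by
    obtain ⟨x, hx, hx0⟩ := (Submodule.ne_bot_iff _).mp hI
    obtain ⟨c, hc, h⟩ := hyp_exists_norm hodd hx0
    rintro rfl
    have := htm c (by rw [← h]; exact hmem x hx x hx)
    exact hc (zero_dvd_iff.mp this)
  have hnorm : ∀ x ∈ I, ∃ c, x * hσ K f x = hι K f c ∧ t ∣ c := by
    intro x hx
    obtain ⟨a, b, rfl⟩ := hyp_rep x
    exact ⟨_, hyp_norm a b, htm _ (by rw [← hyp_norm]; exact hmem _ hx _ hx)⟩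
  refine ⟨t, ht0, le_antisymm ?_ ((Ideal.span_singleton_le_iff_mem _).mpr htD)⟩
  rw [hD, Ideal.mul_le]
  intro x hx y' hy'
  obtain ⟨y, hy, rfl⟩ := (Ideal.mem_map_iff_of_surjective _ hσ_surj).mp hy'
  obtain ⟨a, b, hab⟩ := hyp_rep (x * hσ K f y)
  have h2a : t ∣ 2 * a := by
    refine htm _ ?_
    have : hι K f (2 * a) = x * hσ K f y + y * hσ K f x := by
      have : y * hσ K f x = hσ K f (x * hσ K f y) := by rw [map_mul, hσσ, mul_comm]
      rw [this, hab]
      simp only [map_add, map_mul, hσ_ι, hσ_Y, map_ofNat]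
      ring
    rw [this]
    exact D.add_mem (hmem x hx y hy) (hmem y hy x hx)
  have ha : t ∣ a := by
    have h2 : (C (2⁻¹ : K)) * (2 * a) = a := by
      rw [← mul_assoc, show (2 : K[X]) = C 2 from rfl, ← C_mul]; simp
    rw [← h2]; exact h2a.mul_left _
  obtain ⟨cx, hcx, htx⟩ := hnorm x hx
  obtain ⟨cy, hcy, hty⟩ := hnorm y hy
  have hN : a ^ 2 - f * b ^ 2 = cx * cy := by
    apply hι_inj (f := f)
    rw [← hyp_norm, ← hab, map_mul, map_mul, ← hcx, ← hcy, hσσ]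
    ring
  have hb : t ∣ b := by
    refine dvd_of_sq_dvd_sqfree f t b hf ?_ ht0
    have : f * b ^ 2 = a ^ 2 - cx * cy := by linear_combination -hN
    rw [this]
    refine dvd_sub (pow_dvd_pow_of_dvd ha 2) ?_
    rw [sq]; exact mul_dvd_mul htx hty
  rw [hab, Ideal.mem_span_singleton]
  exact dvd_add (_root_.map_dvd _ ha) ((_root_.map_dvd _ hb).mul_right _)

theorem mem_congr_aux {R : Type*} [CommRing R] {I : Ideal R} {x y : R} (h : x = y) :
    x ∈ I ↔ y ∈ I := by rw [h]

theorem hyp_I_conj {A B Cc x y z : K[X]} (hrel : B ^ 2 - A * Cc = f)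
    (hprim : x * A + y * (2 * B) + z * Cc = 1) :
    HypIdeal K f A B * (HypIdeal K f A B).map (hσ K f) = Ideal.span {hι K f A} := by
  have e : HypIdeal K f A B = Ideal.span {hι K f A, hY K f - hι K f B} := by
    rw [HypIdeal, map_sub]; rfl
  have e' : (HypIdeal K f A B).map (hσ K f) = Ideal.span {hι K f A, - hY K f - hι K f B} := by
    rw [e, Ideal.map_span, Set.image_pair, map_sub, hσ_ι, hσ_ι, hσ_Y]
  have hYf : hY K f ^ 2 = hι K f B ^ 2 - hι K f A * hι K f Cc := by
    rw [hY_sq, ← map_pow, ← map_mul, ← map_sub, hrel]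
  rw [e', e, Ideal.span_pair_mul_span_pair]
  apply le_antisymm
  · rw [Ideal.span_le]
    rintro w (rfl | rfl | rfl | rfl)
    · exact Ideal.mem_span_singleton.mpr (dvd_mul_right _ _)
    · exact Ideal.mem_span_singleton.mpr (dvd_mul_right _ _)
    · exact Ideal.mem_span_singleton.mpr (dvd_mul_left _ _)
    · refine Ideal.mem_span_singleton.mpr ⟨hι K f Cc, ?_⟩
      linear_combination -hYf
  · rw [Ideal.span_singleton_le_iff_mem]
    have h1 := congrArg (hι K f) hprim
    simp only [map_add, map_mul, map_one, map_ofNat] at h1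
    have : hι K f A = hι K f x * (hι K f A * hι K f A)
      + (-hι K f y) * (hι K f A * (- hY K f - hι K f B))
      + (-hι K f y) * ((hY K f - hι K f B) * hι K f A)
      + hι K f z * ((hY K f - hι K f B) * (- hY K f - hι K f B)) := by
      linear_combination (-hι K f A) * h1 + hι K f z * hYf
    refine (mem_congr_aux this).mpr ?_
    refine Ideal.add_mem _ (Ideal.add_mem _ (Ideal.add_mem _ ?_ ?_) ?_) ?_ <;>
    refine Ideal.mul_mem_left _ _ (Ideal.subset_span ?_) <;> simp

theorem alg_step [CharZero K] {A B Cc p x y z : K[X]} (hf : Squarefree f) (hodd : Odd f.natDegree)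
    (hA : A ≠ 0)
    (hcop : IsCoprime A f) (hrel : B ^ 2 - A * Cc = f)
    (hprim : x * A + y * (2 * B) + z * Cc = 1) {ε : K} (hε : ε ≠ 0) (hp : f ∣ C ε * A - p ^ 2) :
    ∃ J : FractionalIdeal (HypRing K f)⁰ (FractionRing (HypRing K f)),
        IsUnit J ∧ ∃ g : FractionRing (HypRing K f), g ≠ 0 ∧
          (HypIdeal K f A B : FractionalIdeal (HypRing K f)⁰ (FractionRing (HypRing K f))) =
            spanSingleton (HypRing K f)⁰ g * J ^ 2 := by
  obtain ⟨u, v, w, hw, huvw⟩ := lin_step f A B p ε hodd hA hcop ⟨Cc, by linear_combination hrel⟩ hε hp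
  have hdom := hyp_domain hodd
  set R := HypRing K f
  set I := HypIdeal K f A B with hI
  set Ib := I.map (hσ K f) with hIb
  let g : R := hι K f u + hι K f v * hY K f
  let gb : R := hσ K f g
  have hgg : g * gb = hι K f (C ε * A * w ^ 2) := by
    rw [← huvw]; exact hyp_norm u v
  have hgb0 : gb ≠ 0 := by
    intro h
    rw [h, mul_zero] at hgg
    have := hι_inj (f := f) (hgg.symm.trans (map_zero _).symm)
    simp [hε, hA, hw] at this
  let aw : R := hι K f (A * w)
  have haw0 : aw ≠ 0 := by
    intro h
    have := hι_inj (f := f) (h.trans (map_zero _).symm)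
    simp [hA, hw] at this
  have hII : I * Ib = Ideal.span {hι K f A} := hyp_I_conj hrel hprim
  let c : Ideal R := Ideal.span {aw} + Ideal.span {gb} * I
  have hc0 : c ≠ ⊥ := by
    intro h
    have : aw ∈ c := Ideal.mem_sup_left (Ideal.mem_span_singleton_self _)
    rw [h] at this
    exact haw0 this
  have hcb : c.map (hσ K f) = Ideal.span {aw} + Ideal.span {g} * Ib := by
    simp only [c]
    rw [Submodule.add_eq_sup, Submodule.add_eq_sup, Ideal.map_sup, Ideal.map_mul, Ideal.map_span, Ideal.map_span]
    have e1 : hσ K f aw = aw := hσ_ι _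
    have e2 : hσ K f gb = g := hσσ g
    rw [Set.image_singleton, Set.image_singleton, e1, e2]
  obtain ⟨t, ht0, ht⟩ := hyp_mul_conj hodd hf c hc0
  have hspan : Ideal.span {gb} * Ideal.span {g} * Ideal.span {hι K f A} =
      Ideal.span {aw} * Ideal.span {aw} := by
    simp only [Ideal.span_singleton_mul_span_singleton]
    have : aw * aw = hι K f (C (ε⁻¹)) * (gb * g * hι K f A) := by
      rw [mul_comm gb g, hgg]
      simp only [aw, ← map_mul]
      congr 1
      have : C ε⁻¹ * C ε = (1 : K[X]) := by rw [← C_mul, inv_mul_cancel₀ hε, C_1]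
      linear_combination (-(A * w) ^ 2) * this
    rw [this]
    symm
    apply Ideal.span_singleton_mul_left_unit
    refine RingHom.isUnit_map _ ?_
    exact isUnit_C.mpr (isUnit_iff_ne_zero.mpr (inv_ne_zero hε))
  have hmain : Ideal.span {gb} * I * c.map (hσ K f) = Ideal.span {aw} * c := by
    rw [hcb]
    calc Ideal.span {gb} * I * (Ideal.span {aw} + Ideal.span {g} * Ib)
        = Ideal.span {aw} * (Ideal.span {gb} * I) + (Ideal.span {gb} * Ideal.span {g} * (I * Ib)) := by
          ring
      _ = Ideal.span {aw} * c := by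
          rw [hII, hspan]; simp only [c]; ring
  have hfin : Ideal.span {gb * hι K f t} * I = Ideal.span {aw} * c ^ 2 := by
    calc Ideal.span {gb * hι K f t} * I = Ideal.span {gb} * I * (c * c.map (hσ K f)) := by
          rw [ht, ← Ideal.span_singleton_mul_span_singleton]; ring
      _ = Ideal.span {gb} * I * c.map (hσ K f) * c := by ring
      _ = _ := by rw [hmain]; ring
  have hιt0 : hι K f t ≠ 0 := fun h => ht0 (hι_inj (f := f) (h.trans (map_zero _).symm))
  let F := FractionRing R
  have hinj : Function.Injective (algebraMap R F) := IsFractionRing.injective R F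
  have hgt : algebraMap R F (gb * hι K f t) ≠ 0 := by
    rw [Ne, map_eq_zero_iff _ hinj]; exact mul_ne_zero hgb0 hιt0
  have htt : algebraMap R F (hι K f t) ≠ 0 := by
    rw [Ne, map_eq_zero_iff _ hinj]; exact hιt0
  refine ⟨(c : FractionalIdeal R⁰ F), ?_, algebraMap R F aw / algebraMap R F (gb * hι K f t), ?_, ?_⟩
  · refine IsUnit.of_mul_eq_one ((c.map (hσ K f) : Ideal R) * spanSingleton R⁰ (algebraMap R F (hι K f t))⁻¹) ?_
    rw [← mul_assoc, ← coeIdeal_mul, ht, coeIdeal_span_singleton, spanSingleton_mul_spanSingleton,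
      mul_inv_cancel₀ htt, spanSingleton_one]
  · exact div_ne_zero (by rw [Ne, map_eq_zero_iff _ hinj]; exact haw0) hgt
  · have h := congrArg (fun Q : Ideal R => (Q : FractionalIdeal R⁰ F)) hfin
    simp only [coeIdeal_mul, coeIdeal_span_singleton, coeIdeal_pow] at h
    have h' := congrArg (fun Q => spanSingleton R⁰ (algebraMap R F (gb * hι K f t))⁻¹ * Q) h
    simp only [← mul_assoc, spanSingleton_mul_spanSingleton] at h'
    rw [inv_mul_cancel₀ hgt, spanSingleton_one, one_mul] at h'
    rw [h', div_eq_inv_mul]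

end PartE2

section PartF

theorem crt_step {K : Type*} [Field K] (a f : K[X]) (hf : Squarefree f)
    (h : ∀ q, Irreducible q → q ∣ f → ∃ p, q ∣ a - p ^ 2) : ∃ p, f ∣ a - p ^ 2 := by
  induction f using UniqueFactorizationMonoid.induction_on_prime with
  | h₁ => exact absurd hf not_squarefree_zero
  | h₂ x hx => exact ⟨0, hx.dvd⟩
  | h₃ d q hd hq ih =>
    obtain ⟨p2, hp2⟩ := ih (hf.of_mul_right) (fun q' hq' hd' => h q' hq' (hd'.mul_left _))
    obtain ⟨p1, hp1⟩ := h q hq.irreducible (dvd_mul_right _ _)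
    have hc : IsCoprime q d := by
      refine (EuclideanDomain.dvd_or_coprime q d hq.irreducible).resolve_left ?_
      intro hqd
      exact hq.not_isUnit (hf q (mul_dvd_mul_left q hqd))
    obtain ⟨x, y, hxy⟩ := hc
    refine ⟨p2 * (x * q) + p1 * (y * d), (show IsCoprime q d from ⟨x, y, hxy⟩).mul_dvd ?_ ?_⟩
    · have : a - (p2 * (x * q) + p1 * (y * d)) ^ 2 = (a - p1 ^ 2) +
        q * ((p1 - p2) * x * (p1 + p2 * (x * q) + p1 * (y * d))) := by
        linear_combination (-p1 * (p1 + p2 * (x * q) + p1 * (y * d))) * hxy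
      rw [this]
      exact dvd_add hp1 (dvd_mul_right _ _)
    · have : a - (p2 * (x * q) + p1 * (y * d)) ^ 2 = (a - p2 ^ 2) +
        d * ((p2 - p1) * y * (p2 + p2 * (x * q) + p1 * (y * d))) := by
        linear_combination (-p2 * (p2 + p2 * (x * q) + p1 * (y * d))) * hxy
      rw [this]
      exact dvd_add hp2 (dvd_mul_right _ _)

theorem sqfree_map {R K : Type*} [CommRing R] [IsDomain R] [IsIntegrallyClosed R] [Field K]
    [Algebra R K] [IsFractionRing R K]
    (f : R[X]) (hm : f.Monic) (hf : Squarefree f) : Squarefree (f.map (algebraMap R K)) := by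
  intro x hx
  have hfm : (f.map (algebraMap R K)) ≠ 0 := (hm.map _).ne_zero
  have hx0 : x ≠ 0 := by rintro rfl; simp at hx; exact hfm (by simpa using hx)
  obtain ⟨g, hg⟩ := IsIntegrallyClosed.eq_map_mul_C_of_dvd K hm (dvd_of_mul_right_dvd hx)
  have hlc : IsUnit (C x.leadingCoeff) := by
    rw [isUnit_C, isUnit_iff_ne_zero]; simpa using hx0
  have hgm : (g.map (algebraMap R K)).Monic := by
    have := congrArg leadingCoeff hg
    rw [leadingCoeff_mul, leadingCoeff_C] at this
    exact mul_right_cancel₀ (leadingCoeff_ne_zero.mpr hx0) (by rw [this, one_mul])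
  have hinj := IsFractionRing.injective R K
  have hgm' : g.Monic := monic_of_injective hinj hgm
  have : g * g ∣ f := by
    rw [← map_dvd_map _ hinj (hgm'.mul hgm'), Polynomial.map_mul]
    refine dvd_trans ?_ hx
    conv_rhs => rw [← hg]
    exact mul_dvd_mul (dvd_mul_right _ _) (dvd_mul_right _ _)
  have hu := hf g this
  rw [← hg]
  exact (hu.map (mapRingHom (algebraMap R K))).mul hlc

end PartF

section PartG1

theorem hos_exists_prime (L : Type*) [Field L] [NumberField L] (P : HeightOneSpectrum (𝓞 L)) :
    ∃ ℓ : Nat.Primes, ((ℓ : ℕ) : 𝓞 L) ∈ P.asIdeal ∧ ∃ j, j ≠ 0 ∧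
      Ideal.absNorm P.asIdeal = (ℓ : ℕ) ^ j := by
  have hP := P.isPrime
  have h2 := hos_two_le L P
  have hex : ∀ n : ℕ, n ≠ 0 → (n : 𝓞 L) ∈ P.asIdeal → ∃ ℓ : ℕ, ℓ.Prime ∧ (ℓ : 𝓞 L) ∈ P.asIdeal := by
    intro n
    induction n using Nat.recOnMul with
    | zero => intro h; exact absurd rfl h
    | one => intro _ h; exact absurd (P.asIdeal.eq_top_of_isUnit_mem h (by simp)) hP.ne_top
    | prime p hp => intro _ h; exact ⟨p, hp, h⟩
    | mul a b ha hb =>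
      intro h0 h
      push_cast at h
      rcases hP.mem_or_mem h with h | h
      · exact ha (left_ne_zero_of_mul h0) h
      · exact hb (right_ne_zero_of_mul h0) h
  obtain ⟨ℓ, hℓ, hmem⟩ := hex _ (by omega) (Ideal.absNorm_mem P.asIdeal)
  refine ⟨⟨ℓ, hℓ⟩, hmem, ?_⟩
  have hd : Ideal.absNorm P.asIdeal ∣ Ideal.absNorm (Ideal.span {(ℓ : 𝓞 L)}) :=
    Ideal.absNorm_dvd_absNorm_of_le ((Ideal.span_singleton_le_iff_mem _).mpr hmem)
  rw [Ideal.absNorm_span_natCast] at hd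
  obtain ⟨j, -, hj⟩ := (Nat.dvd_prime_pow hℓ).mp hd
  refine ⟨j, ?_, hj⟩
  rintro rfl
  rw [hj] at h2; simp at h2

noncomputable def hosP (L : Type*) [Field L] [NumberField L] (P : HeightOneSpectrum (𝓞 L)) :
    Nat.Primes := (hos_exists_prime L P).choose

theorem hosP_mem (L : Type*) [Field L] [NumberField L] (P : HeightOneSpectrum (𝓞 L)) :
    ((hosP L P : ℕ) : 𝓞 L) ∈ P.asIdeal := (hos_exists_prime L P).choose_spec.1

theorem hosP_norm (L : Type*) [Field L] [NumberField L] (P : HeightOneSpectrum (𝓞 L)) :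
    ∃ j, j ≠ 0 ∧ Ideal.absNorm P.asIdeal = (hosP L P : ℕ) ^ j := (hos_exists_prime L P).choose_spec.2

theorem tsum_hosP_le (L : Type*) [Field L] [NumberField L] (h : Nat.Primes → ℝ≥0∞) :
    ∑' P, h (hosP L P) ≤ (Module.finrank ℚ L : ℝ≥0∞) * ∑' ℓ, h ℓ := by
  classical
  rw [← ENNReal.tsum_fiberwise _ (hosP L), ← ENNReal.tsum_mul_left]
  refine ENNReal.tsum_le_tsum fun ℓ => ?_
  have hle : (Ideal.span {(ℓ : ℤ)}).IsMaximal := by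
    have := (Nat.prime_iff_prime_int.mp ℓ.2)
    exact PrincipalIdealRing.isMaximal_of_irreducible this.irreducible
  have h0 : Ideal.span {(ℓ : ℤ)} ≠ ⊥ := by
    rw [Ne, Ideal.span_singleton_eq_bot]; exact_mod_cast ℓ.2.ne_zero
  have hcard := Ideal.card_primesOverFinset_le_finrank (S := 𝓞 L) (K := ℚ) (L := L) h0
  let i : (hosP L ⁻¹' {ℓ}) → IsDedekindDomain.primesOverFinset (Ideal.span {(ℓ : ℤ)}) (𝓞 L) :=
    fun P => ⟨P.1.asIdeal, by
      rw [IsDedekindDomain.mem_primesOverFinset_iff h0]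
      refine ⟨P.1.isPrime, ⟨?_⟩⟩
      refine hle.eq_of_le ?_ ?_
      · exact (Ideal.comap_isPrime _ _ (H := P.1.isPrime)).ne_top
      · rw [Ideal.span_singleton_le_iff_mem, Ideal.mem_comap]
        have := hosP_mem L P.1
        have hp : hosP L P.1 = ℓ := P.2
        rw [hp] at this
        simpa using this⟩
  have hi : Function.Injective i := by
    intro P Q hPQ
    exact Subtype.ext (HeightOneSpectrum.ext (congrArg Subtype.val hPQ))
  calc ∑' P : (hosP L ⁻¹' {ℓ}), h (hosP L P.1) = ∑' P : (hosP L ⁻¹' {ℓ}), h ℓ := by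
        refine tsum_congr fun P => ?_
        rw [show hosP L P.1 = ℓ from P.2]
    _ = ∑' P : (hosP L ⁻¹' {ℓ}), (fun _ => h ℓ) (i P) := rfl
    _ ≤ ∑' Q : IsDedekindDomain.primesOverFinset (Ideal.span {(ℓ : ℤ)}) (𝓞 L), h ℓ :=
        ENNReal.tsum_comp_le_tsum_of_injective hi _
    _ = ((IsDedekindDomain.primesOverFinset (Ideal.span {(ℓ : ℤ)}) (𝓞 L)).card : ℝ≥0∞) * h ℓ := by
        rw [tsum_fintype]; simp
    _ ≤ _ := by gcongr

theorem tsum_H_ne_top (L : Type*) [Field L] [NumberField L] (β : 𝓞 L) (hβ : β ≠ 0)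
    (BB : Set ℕ)
    (hB : ∑' ℓ : Nat.Primes, Set.indicator {ℓ : Nat.Primes | (ℓ : ℕ) ∈ BB}
      (fun ℓ => ((ℓ : ℕ) : ℝ≥0∞)⁻¹) ℓ ≠ ⊤) :
    ∑' P : ({P : HeightOneSpectrum (𝓞 L) | β ∈ P.asIdeal} ∪
      ({P | ¬ (Ideal.absNorm P.asIdeal).Prime} ∪
        {P | (Ideal.absNorm P.asIdeal).Prime ∧ Ideal.absNorm P.asIdeal ∈ BB}) :
        Set (HeightOneSpectrum (𝓞 L))), ((Ideal.absNorm P.1.asIdeal : ℝ≥0∞))⁻¹ ≠ ⊤ := by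
  have hfr : (Module.finrank ℚ L : ℝ≥0∞) ≠ ⊤ := ENNReal.natCast_ne_top _
  refine ne_top_of_le_ne_top ?_ (ENNReal.tsum_union_le
    (fun P : HeightOneSpectrum (𝓞 L) => ((Ideal.absNorm P.asIdeal : ℝ≥0∞))⁻¹) _ _)
  refine ENNReal.add_ne_top.mpr ⟨?_, ne_top_of_le_ne_top ?_ (ENNReal.tsum_union_le
    (fun P : HeightOneSpectrum (𝓞 L) => ((Ideal.absNorm P.asIdeal : ℝ≥0∞))⁻¹) _ _)⟩
  · have hfin : {P : HeightOneSpectrum (𝓞 L) | β ∈ P.asIdeal}.Finite := by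
      have := Ideal.finite_factors (I := Ideal.span {β}) (by simpa using hβ)
      refine this.subset fun P hP => ?_
      exact Ideal.dvd_iff_le.mpr ((Ideal.span_singleton_le_iff_mem _).mpr hP)
    have := hfin.fintype
    rw [tsum_fintype]
    refine ENNReal.sum_ne_top.mpr fun P _ => ?_
    rw [Ne, ENNReal.inv_eq_top]
    have := hos_two_le L P.1
    exact_mod_cast (by omega : Ideal.absNorm P.1.asIdeal ≠ 0)
  refine ENNReal.add_ne_top.mpr ⟨?_, ?_⟩
  · let h : Nat.Primes → ℝ≥0∞ := fun ℓ => (((ℓ : ℕ) : ℝ≥0∞) ^ 2)⁻¹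
    have hh : ∑' ℓ, h ℓ ≠ ⊤ := by
      have h1 : Summable (fun n : ℕ => ((n : ℝ) ^ 2)⁻¹) := Real.summable_nat_pow_inv.mpr (by norm_num)
      have h2 := (h1.comp_injective (i := fun ℓ : Nat.Primes => (ℓ : ℕ)) Subtype.val_injective)
      have h3 := h2.tsum_ofReal_ne_top
      convert h3 using 3 with ℓ
      simp only [h, Function.comp]
      have : (0:ℝ) < (ℓ : ℕ) := by exact_mod_cast ℓ.2.pos
      rw [ENNReal.ofReal_inv_of_pos (by positivity), ENNReal.ofReal_pow (by positivity)]
      simp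
    refine ne_top_of_le_ne_top (ENNReal.mul_ne_top hfr hh) (le_trans ?_ (tsum_hosP_le L h))
    refine le_trans (ENNReal.tsum_le_tsum fun P => ?_)
      (ENNReal.tsum_comp_le_tsum_of_injective Subtype.val_injective (fun P => h (hosP L P)))
    obtain ⟨j, hj, hN⟩ := hosP_norm L P.1
    have hP : ¬ (Ideal.absNorm P.1.asIdeal).Prime := P.2
    have hj2 : 2 ≤ j := by
      by_contra hlt
      have : j = 1 := by omega
      rw [hN, this, pow_one] at hP
      exact hP (hosP L P.1).2
    simp only [h]
    rw [ENNReal.inv_le_inv, hN]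
    push_cast
    exact pow_le_pow_right₀ (by exact_mod_cast (hosP L P.1).2.one_le) hj2
  · refine ne_top_of_le_ne_top (ENNReal.mul_ne_top hfr hB) (le_trans ?_ (tsum_hosP_le L _))
    refine le_trans (ENNReal.tsum_le_tsum fun P => ?_)
      (ENNReal.tsum_comp_le_tsum_of_injective Subtype.val_injective (fun P => Set.indicator
        {ℓ : Nat.Primes | (ℓ : ℕ) ∈ BB} (fun ℓ => ((ℓ : ℕ) : ℝ≥0∞)⁻¹) (hosP L P)))
    obtain ⟨j, hj, hN⟩ := hosP_norm L P.1
    have hP : (Ideal.absNorm P.1.asIdeal).Prime ∧ Ideal.absNorm P.1.asIdeal ∈ BB := P.2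
    have hj1 : j = 1 := by
      have := hP.1
      rw [hN] at this
      exact this.eq_one_of_pow
    rw [hj1, pow_one] at hN
    rw [Set.indicator_of_mem (by show (hosP L P.1 : ℕ) ∈ BB; rw [← hN]; exact hP.2), hN]

end PartG1

section PartG2

theorem clear_denoms (K : Type*) [Field K] [NumberField K] (S : Finset (HeightOneSpectrum (𝓞 K))) :
    ∃ m : 𝓞 K, m ≠ 0 ∧ ∀ x : SInt K S, ∃ (k : ℕ) (y : 𝓞 K),
      (algebraMap (𝓞 K) K m) ^ k * (x : K) = algebraMap (𝓞 K) K y := by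
  classical
  have hex : ∀ v : HeightOneSpectrum (𝓞 K), ∃ a ∈ v.asIdeal, a ≠ 0 := fun v =>
    (Submodule.ne_bot_iff _).mp v.ne_bot
  choose a ha ha0 using hex
  refine ⟨∏ v ∈ S, a v, Finset.prod_ne_zero_iff.mpr fun v _ => ha0 v, fun x => ?_⟩
  set m := ∏ v ∈ S, a v with hm
  have hm0 : m ≠ 0 := Finset.prod_ne_zero_iff.mpr fun v _ => ha0 v
  have hmv : ∀ v ∈ S, v.valuation K (algebraMap (𝓞 K) K m) < 1 := by
    intro v hv
    rw [HeightOneSpectrum.valuation_lt_one_iff_mem]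
    rw [hm, ← Finset.mul_prod_erase S a hv]
    exact v.asIdeal.mul_mem_right _ (ha v)
  have hk : ∀ v : HeightOneSpectrum (𝓞 K), ∃ k : ℕ, v ∈ S →
      v.valuation K (algebraMap (𝓞 K) K m) ^ k * v.valuation K (x : K) ≤ 1 := by
    intro v
    by_cases hv : v ∈ S
    · have hne : v.valuation K (algebraMap (𝓞 K) K m) ≠ 0 := by
        rw [Valuation.ne_zero_iff]; simpa using hm0
      have h1 : 1 < (v.valuation K (algebraMap (𝓞 K) K m))⁻¹ :=
        (one_lt_inv₀ (zero_lt_iff.mpr hne)).mpr (hmv v hv)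
      obtain ⟨k, hk⟩ := MulArchimedean.arch (v.valuation K (x : K)) h1
      refine ⟨k, fun _ => ?_⟩
      calc v.valuation K (algebraMap (𝓞 K) K m) ^ k * v.valuation K (x : K)
          ≤ v.valuation K (algebraMap (𝓞 K) K m) ^ k * (v.valuation K (algebraMap (𝓞 K) K m))⁻¹ ^ k := by
            gcongr
        _ = 1 := by rw [← mul_pow, mul_inv_cancel₀ hne, one_pow]
    · exact ⟨0, fun h => absurd h hv⟩
  choose k hk using hk
  refine ⟨∑ v ∈ S, k v, ?_⟩
  obtain ⟨y, hy⟩ := HeightOneSpectrum.mem_integers_of_valuation_le_one (R := 𝓞 K) K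
    ((algebraMap (𝓞 K) K m) ^ (∑ v ∈ S, k v) * (x : K)) (fun v => by
      rw [map_mul, map_pow]
      have hle : v.valuation K (algebraMap (𝓞 K) K m) ≤ 1 := v.valuation_le_one m
      by_cases hv : v ∈ S
      · refine le_trans ?_ (hk v hv)
        gcongr ?_ * _
        exact pow_le_pow_right_of_le_one' hle (Finset.single_le_sum (fun _ _ => Nat.zero_le _) hv)
      · exact mul_le_one' (pow_le_one' hle _) (x.2 v (by simpa using hv)))
  exact ⟨y, hy.symm⟩

theorem residue_hom (L : Type*) [Field L] [NumberField L] (P : HeightOneSpectrum (𝓞 L)) (m : 𝓞 L)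
    (hm : m ∉ P.asIdeal) : ∃ (R' : Subring L) (ψ : R' →+* 𝓞 L ⧸ P.asIdeal),
      (∀ x : L, (∃ (k : ℕ) (y : 𝓞 L), (algebraMap (𝓞 L) L m) ^ k * x = algebraMap (𝓞 L) L y) → x ∈ R') ∧
      ∀ (y : 𝓞 L) (h : algebraMap (𝓞 L) L y ∈ R'), ψ ⟨_, h⟩ = Ideal.Quotient.mk _ y := by
  have hPm := P.isMaximal
  letI := Ideal.Quotient.field P.asIdeal
  have hm0 : m ≠ 0 := by rintro rfl; exact hm (zero_mem _)
  have hS : Submonoid.powers m ≤ (𝓞 L)⁰ := by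
    rw [Submonoid.powers_le]; exact mem_nonZeroDivisors_of_ne_zero hm0
  let R' := Localization.subalgebra.ofField L (Submonoid.powers m) hS
  have hu : ∀ y : Submonoid.powers m, IsUnit (Ideal.Quotient.mk P.asIdeal (y : 𝓞 L)) := by
    rintro ⟨y, k, rfl⟩
    rw [isUnit_iff_ne_zero]
    show Ideal.Quotient.mk P.asIdeal (m ^ k) ≠ 0
    rw [map_pow]
    refine pow_ne_zero _ ?_
    rw [Ne, Ideal.Quotient.eq_zero_iff_mem]; exact hm
  refine ⟨R'.toSubring, (IsLocalization.lift (M := Submonoid.powers m) (S := R') hu), ?_, ?_⟩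
  · rintro x ⟨k, y, hxy⟩
    refine ⟨y, m ^ k, ⟨k, rfl⟩, ?_⟩
    have h0 : algebraMap (𝓞 L) L m ≠ 0 := by simpa using hm0
    rw [map_pow, ← hxy, mul_comm, ← mul_assoc, inv_mul_cancel₀ (pow_ne_zero k h0), one_mul]
  · intro y h
    exact IsLocalization.lift_eq (M := Submonoid.powers m) (S := R') hu y

theorem hom_surj_of_prime_card {R k : Type*} [Ring R] [Ring k] [Nontrivial k] (φ : R →+* k)
    (h : (Nat.card k).Prime) : Function.Surjective φ := by
  have : Fact (Nat.card k).Prime := ⟨h⟩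
  have h1 := AddSubgroup.eq_bot_or_eq_top_of_prime_card (φ.toAddMonoidHom.range)
  rcases h1 with h1 | h1
  · exfalso
    have : (1 : k) ∈ φ.toAddMonoidHom.range := ⟨1, map_one φ⟩
    rw [h1] at this
    exact one_ne_zero (AddSubgroup.mem_bot.mp this)
  · intro x
    have : x ∈ φ.toAddMonoidHom.range := by rw [h1]; trivial
    exact this

theorem div_general (K : Type*) [Field K] [NumberField K] (S : Finset (HeightOneSpectrum (𝓞 K)))
    (L : Type*) [Field L] [NumberField L] [Algebra K L] (θ : L)
    (f : (𝓞 K)[X]) (hm : f.Monic)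
    (hfθ : (f.map (algebraMap (𝓞 K) K)).eval₂ (algebraMap K L) θ = 0)
    (A : (SInt K S)[X]) (ε : SInt K S)
    (hα : ¬ IsSquare (algebraMap K L (ε : K) *
      A.eval₂ ((algebraMap K L).comp (algebraMap (SInt K S) K)) θ))
    (T : Set (SInt K S)) (hT : ∀ n ∈ T, ∃ u v : SInt K S, ε * A.eval n = u ^ 2 -
      (f.map (algebraMap (𝓞 K) (SInt K S))).eval n * v ^ 2)
    (BB : Set ℕ) (hBB : BB = {ℓ : ℕ | ∃ q : Ideal (SInt K S), Nat.card (SInt K S ⧸ q) = ℓ ∧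
      ∃ r : SInt K S, ∀ n ∈ T, n - r ∉ q}) :
    ∑' ℓ : Nat.Primes, Set.indicator {ℓ : Nat.Primes | (ℓ : ℕ) ∈ BB}
      (fun ℓ => ((ℓ : ℕ) : ℝ≥0∞)⁻¹) ℓ = ⊤ := by
  by_contra hfin
  obtain ⟨m, hm0, hmx⟩ := clear_denoms K S
  let M : 𝓞 L := algebraMap (𝓞 K) (𝓞 L) m
  have hMc : algebraMap (𝓞 L) L M = algebraMap K L (algebraMap (𝓞 K) K m) := rfl
  have hM0 : M ≠ 0 := by
    intro h
    rw [h, map_zero] at hMc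
    have := hMc.symm
    rw [map_eq_zero, map_eq_zero_iff _ (FaithfulSMul.algebraMap_injective (𝓞 K) K)] at this
    exact hm0 this
  let j0 : SInt K S →+* L := (algebraMap K L).comp (algebraMap (SInt K S) K)
  have hj0 : ∀ x, ∃ (k : ℕ) (y : 𝓞 L), (algebraMap (𝓞 L) L M) ^ k * j0 x = algebraMap (𝓞 L) L y := by
    intro x
    obtain ⟨k, y, h⟩ := hmx x
    refine ⟨k, algebraMap (𝓞 K) (𝓞 L) y, ?_⟩
    rw [hMc, ← map_pow]
    show _ * algebraMap K L (x : K) = algebraMap K L (algebraMap (𝓞 K) K y)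
    rw [← map_mul, h]
  have hθi : IsIntegral ℤ θ := by
    have h1 : IsIntegral (𝓞 K) θ := by
      refine ⟨f, hm, ?_⟩
      rw [eval₂_map] at hfθ
      exact hfθ
    exact isIntegral_trans (R := ℤ) (A := 𝓞 K) θ h1
  let t : 𝓞 L := ⟨θ, hθi⟩
  set α := algebraMap K L (ε : K) * A.eval₂ ((algebraMap K L).comp (algebraMap (SInt K S) K)) θ with hαdef
  have hM0' : algebraMap (𝓞 L) L M ≠ 0 := by simpa using hM0
  have hαd : ∃ (k : ℕ) (y : 𝓞 L), (algebraMap (𝓞 L) L M) ^ k * α = algebraMap (𝓞 L) L y := by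
    have hS : Submonoid.powers M ≤ (𝓞 L)⁰ := by
      rw [Submonoid.powers_le]; exact mem_nonZeroDivisors_of_ne_zero hM0
    let R' := Localization.subalgebra.ofField L (Submonoid.powers M) hS
    have hR : ∀ x : L, x ∈ R' ↔ ∃ (k : ℕ) (y : 𝓞 L),
        (algebraMap (𝓞 L) L M) ^ k * x = algebraMap (𝓞 L) L y := by
      intro x
      constructor
      · rintro ⟨y, _, ⟨k, rfl⟩, hx⟩
        refine ⟨k, y, ?_⟩
        rw [hx]
        simp only [map_pow]
        field_simp
      · rintro ⟨k, y, hxy⟩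
        refine ⟨y, M ^ k, ⟨k, rfl⟩, ?_⟩
        rw [map_pow, ← hxy]
        field_simp
    rw [← hR, hαdef]
    refine R'.mul_mem ((hR _).mpr (hj0 ε)) ?_
    rw [eval₂_eq_sum]
    refine R'.sum_mem fun i _ => R'.mul_mem ((hR _).mpr (hj0 _)) (R'.pow_mem ?_ _)
    exact (hR _).mpr ⟨0, t, by simp [t]; rfl⟩
  obtain ⟨k0, y0, hy0⟩ := hαd
  let α' : 𝓞 L := M ^ k0 * y0
  have hα' : algebraMap (𝓞 L) L α' = (algebraMap (𝓞 L) L M ^ k0) ^ 2 * α := by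
    simp only [α', map_mul, map_pow]
    rw [← hy0]; ring
  have hα's : ¬ IsSquare (α' : L) := by
    rintro ⟨s, hs⟩
    apply hα
    refine ⟨s / (algebraMap (𝓞 L) L M ^ k0), ?_⟩
    have hs' : algebraMap (𝓞 L) L α' = s * s := hs
    rw [hα'] at hs'
    field_simp
    linear_combination hs'
  have hα'0 : α' ≠ 0 := by
    intro h
    apply hα's
    rw [h]
    exact ⟨0, by simp⟩
  have hβ0 : 2 * α' * M ≠ 0 := mul_ne_zero (mul_ne_zero two_ne_zero hα'0) hM0
  refine key_nonsquare L α' hα's _ (tsum_H_ne_top L (2 * α' * M) hβ0 BB hfin) ?_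
  intro P hP
  simp only [Set.mem_union, Set.mem_setOf_eq, not_or, not_not, not_and] at hP
  obtain ⟨hP1, hP2, hP3⟩ := hP
  have hP3 := hP3 hP2
  refine ⟨fun h => hP1 (P.asIdeal.mul_mem_right _ h), ?_⟩
  have hMP : M ∉ P.asIdeal := fun h => hP1 (P.asIdeal.mul_mem_left _ h)
  obtain ⟨R', ψ, hR', hψ⟩ := residue_hom L P M hMP
  have h_integral : ∀ y : 𝓞 L, algebraMap (𝓞 L) L y ∈ R' := fun y => hR' _ ⟨0, y, by simp⟩
  let j : SInt K S →+* R' := j0.codRestrict R' (fun x => hR' _ (hj0 x))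
  let tR : R' := ⟨algebraMap (𝓞 L) L t, h_integral t⟩
  have htR : (tR : L) = θ := rfl
  let φ : SInt K S →+* 𝓞 L ⧸ P.asIdeal := ψ.comp j
  have hPmax := P.isMaximal
  letI := Ideal.Quotient.field P.asIdeal
  have hcard : Nat.card (𝓞 L ⧸ P.asIdeal) = Ideal.absNorm P.asIdeal := by
    rw [Ideal.absNorm_apply]; rfl
  have hsurj : Function.Surjective φ := hom_surj_of_prime_card φ (by rw [hcard]; exact hP2)
  obtain ⟨r, hr⟩ := hsurj (ψ tR)
  have hnot : ¬ ∀ n ∈ T, n - r ∉ RingHom.ker φ := by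
    intro h
    apply hP3
    rw [hBB]
    refine ⟨RingHom.ker φ, ?_, r, h⟩
    rw [← hcard]
    exact Nat.card_congr (RingHom.quotientKerEquivOfSurjective hsurj).toEquiv
  push Not at hnot
  obtain ⟨n, hnT, hn⟩ := hnot
  have hφn : φ n = ψ tR := by
    rw [RingHom.mem_ker, map_sub, sub_eq_zero, hr] at hn
    exact hn
  obtain ⟨u, v, huv⟩ := hT n hnT
  have hval : ∀ p : (SInt K S)[X], φ (p.eval n) = ψ (p.eval₂ j tR) := by
    intro p
    rw [hom_eval₂, ← hφn, ← eval₂_at_apply]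
  have hcoe : ∀ p : (SInt K S)[X], ((p.eval₂ j tR : R') : L) = p.eval₂ j0 θ := by
    intro p
    have := hom_eval₂ p j R'.subtype tR
    rw [show ((p.eval₂ j tR : R') : L) = R'.subtype (p.eval₂ j tR) from rfl, this]
    rfl
  have hf0 : (f.map (algebraMap (𝓞 K) (SInt K S))).eval₂ j tR = 0 := by
    apply Subtype.ext
    rw [hcoe, eval₂_map]
    rw [eval₂_map] at hfθ
    exact hfθ
  have h1 := congrArg φ huv
  rw [map_sub, map_mul, map_mul, map_pow, map_pow, hval, hval, hf0, map_zero, zero_mul, sub_zero] at h1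
  have hαR : α ∈ R' := by
    have : α = ((j ε * A.eval₂ j tR : R') : L) := by
      rw [Subring.coe_mul, hcoe]; rfl
    rw [this]; exact Subtype.property _
  have hψα : ψ ⟨α, hαR⟩ = φ u ^ 2 := by
    rw [← h1]
    show _ = ψ (j ε) * _
    rw [← map_mul]
    congr 1
    apply Subtype.ext
    rw [Subring.coe_mul, hcoe]; rfl
  obtain ⟨s, hs⟩ := Ideal.Quotient.mk_surjective (Ideal.Quotient.mk P.asIdeal M ^ k0 * φ u)
  refine ⟨s, ?_⟩
  rw [← Ideal.Quotient.eq_zero_iff_mem, map_sub, map_pow, hs, sub_eq_zero, mul_pow, ← hψα,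
    ← hψ α' (h_integral _), ← hψ M (h_integral _), ← map_pow, ← map_pow, ← map_mul]
  congr 1
  apply Subtype.ext
  exact hα'

theorem div_step (K : Type*) [Field K] [NumberField K] (S : Finset (HeightOneSpectrum (𝓞 K)))
    (f : (𝓞 K)[X]) (hm : f.Monic) (A : (SInt K S)[X]) (ε : SInt K S)
    (q : K[X]) (hq : Irreducible q) (hqf : q ∣ f.map (algebraMap (𝓞 K) K))
    (hns : ¬ ∃ p, q ∣ C (ε : K) * A.map (algebraMap (SInt K S) K) - p ^ 2)
    (T : Set (SInt K S)) (hT : ∀ n ∈ T, ∃ u v : SInt K S, ε * A.eval n = u ^ 2 -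
      (f.map (algebraMap (𝓞 K) (SInt K S))).eval n * v ^ 2)
    (BB : Set ℕ) (hBB : BB = {ℓ : ℕ | ∃ q : Ideal (SInt K S), Nat.card (SInt K S ⧸ q) = ℓ ∧
      ∃ r : SInt K S, ∀ n ∈ T, n - r ∉ q}) :
    ∑' ℓ : Nat.Primes, Set.indicator {ℓ : Nat.Primes | (ℓ : ℕ) ∈ BB}
      (fun ℓ => ((ℓ : ℕ) : ℝ≥0∞)⁻¹) ℓ = ⊤ := by
  have : Fact (Irreducible q) := ⟨hq⟩
  have hfin : Module.Finite K (AdjoinRoot q) := (AdjoinRoot.powerBasis hq.ne_zero).finite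
  have : NumberField (AdjoinRoot q) := NumberField.of_module_finite K _
  have hev : ∀ p : K[X], p.eval₂ (algebraMap K (AdjoinRoot q)) (AdjoinRoot.root q) = AdjoinRoot.mk q p :=
    fun p => AdjoinRoot.aeval_eq p
  refine div_general K S (AdjoinRoot q) (AdjoinRoot.root q) f hm ?_ A ε ?_ T hT BB hBB
  · rw [hev, AdjoinRoot.mk_eq_zero]; exact hqf
  · rw [← eval₂_map, hev]
    rintro ⟨s, hs⟩
    obtain ⟨p, rfl⟩ := AdjoinRoot.mk_surjective s
    apply hns
    refine ⟨p, ?_⟩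
    rw [← AdjoinRoot.mk_eq_zero, map_sub, map_mul, map_pow, sq, ← hs, sub_eq_zero]
    rfl

end PartG2

section PartH

lemma delta_biUnion_le {O ι : Type*} (δ : Set O → ℝ) (h0 : δ ∅ = 0)
    (hδunion : ∀ P Q, δ (P ∪ Q) ≤ δ P + δ Q) (s : Finset ι) (P : ι → Set O) :
    δ (⋃ i ∈ s, P i) ≤ ∑ i ∈ s, δ (P i) := by
  classical
  induction s using Finset.induction_on with
  | empty => simp [h0]
  | insert a s ha ih =>
    rw [Finset.set_biUnion_insert, Finset.sum_insert ha]
    exact (hδunion _ _).trans (by linarith)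

lemma density_fin {O : Type*} [CommRing O] [CharZero O] (δ : Set O → ℝ)
    (h0 : δ ∅ = 0)
    (hδmono : ∀ P Q, P ⊆ Q → δ P ≤ δ Q)
    (hδunion : ∀ P Q, δ (P ∪ Q) ≤ δ P + δ Q)
    (hδtrans : ∀ (α : O) (P : Set O), δ ((α + ·) '' P) = δ P)
    (hδideal : ∀ I : Ideal O, I ≠ ⊥ → δ (I : Set O) = 1 / (Nat.card (O ⧸ I) : ℝ))
    (T : Set O) (F : Finset Nat.Primes) (q : Nat.Primes → Ideal O) (r : Nat.Primes → O)
    (hq : ∀ ℓ ∈ F, Nat.card (O ⧸ q ℓ) = (ℓ : ℕ))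
    (hr : ∀ ℓ ∈ F, ∀ n ∈ T, n - r ℓ ∉ q ℓ) :
    δ T ≤ ∏ ℓ ∈ F, (1 - ((ℓ : ℕ) : ℝ)⁻¹) := by
  classical
  have hmem : ∀ ℓ ∈ F, (((ℓ : ℕ) : ℕ) : O) ∈ q ℓ := by
    intro ℓ hℓ
    rw [← Ideal.Quotient.eq_zero_iff_mem, ← hq ℓ hℓ, map_natCast]
    have h := pow_card_eq_one' (x := Multiplicative.ofAdd (1 : O ⧸ q ℓ))
    have h2 : (Nat.card (O ⧸ q ℓ)) • (1 : O ⧸ q ℓ) = 0 := by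
      have := card_nsmul_eq_zero' (x := (1 : O ⧸ q ℓ))
      exact this
    simpa using h2
  let J : F → Ideal O := fun i => q i.1
  have hJ : Pairwise (Function.onFun IsCoprime J) := by
    intro i j hij
    have hne : (i.1 : ℕ) ≠ (j.1 : ℕ) := fun h => hij (Subtype.ext (Subtype.ext h))
    have hc : Nat.Coprime (i.1 : ℕ) (j.1 : ℕ) :=
      (Nat.coprime_primes i.1.2 j.1.2).2 hne
    have hc2 : IsCoprime (((i.1 : ℕ) : ℤ)) (((j.1 : ℕ) : ℤ)) := Nat.isCoprime_iff_coprime.2 hc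
    obtain ⟨a, b, hab⟩ := hc2
    show IsCoprime (q i.1) (q j.1)
    rw [Ideal.isCoprime_iff_exists]
    refine ⟨(a : O) * ((i.1 : ℕ) : O), Ideal.mul_mem_left _ _ (hmem _ i.2),
      (b : O) * ((j.1 : ℕ) : O), Ideal.mul_mem_left _ _ (hmem _ j.2), ?_⟩
    exact_mod_cast congrArg (fun z : ℤ => (z : O)) hab
  obtain ⟨I, hI⟩ : ∃ I : Ideal O, I = ⨅ i, J i := ⟨_, rfl⟩
  obtain ⟨e, he⟩ : ∃ e : (O ⧸ I) ≃+* (∀ i, O ⧸ J i), ∀ (n : O) (i : F),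
      e (Ideal.Quotient.mk I n) i = Ideal.Quotient.mk (J i) n := by
    subst hI
    exact ⟨Ideal.quotientInfRingEquivPiQuotient J hJ, fun n i => rfl⟩
  have hcard : Nat.card (O ⧸ I) = ∏ ℓ ∈ F, (ℓ : ℕ) := by
    rw [Nat.card_congr e.toEquiv, Nat.card_pi, ← Finset.prod_coe_sort F]
    exact Finset.prod_congr rfl fun i _ => hq i.1 i.2
  have hpos : ∀ ℓ : Nat.Primes, 0 < (ℓ : ℕ) := fun ℓ => ℓ.2.pos
  have hIne : I ≠ ⊥ := by
    intro hb
    have h1 : ((∏ ℓ ∈ F, (ℓ : ℕ) : ℕ) : O) ∈ I := by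
      rw [hI, Ideal.mem_iInf]
      intro i
      obtain ⟨c, hc⟩ := Finset.dvd_prod_of_mem (fun ℓ : Nat.Primes => (ℓ : ℕ)) i.2
      rw [hc, Nat.cast_mul]
      exact Ideal.mul_mem_right _ _ (hmem _ i.2)
    rw [hb, Ideal.mem_bot, Nat.cast_eq_zero, Finset.prod_eq_zero_iff] at h1
    obtain ⟨ℓ, _, h⟩ := h1
    exact (hpos ℓ).ne' h
  have hfinI : ∀ i : F, Finite (O ⧸ J i) := fun i =>
    Nat.finite_of_card_ne_zero (by
      have : Nat.card (O ⧸ J i) = (i.1 : ℕ) := hq i.1 i.2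
      rw [this]; exact (hpos _).ne')
  letI : ∀ i : F, Fintype (O ⧸ J i) := fun i => Fintype.ofFinite _
  let W : Finset (∀ i : F, O ⧸ J i) :=
    Fintype.piFinset fun i => Finset.univ.erase (Ideal.Quotient.mk (J i) (r i.1))
  have hWcard : W.card = ∏ ℓ ∈ F, ((ℓ : ℕ) - 1) := by
    rw [Fintype.card_piFinset, ← Finset.prod_coe_sort F]
    refine Finset.prod_congr rfl fun i _ => ?_
    rw [Finset.card_erase_of_mem (Finset.mem_univ _), Finset.card_univ, ← Nat.card_eq_fintype_card]
    have : Nat.card (O ⧸ J i) = (i.1 : ℕ) := hq i.1 i.2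
    rw [this]
  let rep : (∀ i : F, O ⧸ J i) → O := fun w => (Ideal.Quotient.mk_surjective (e.symm w)).choose
  have hrep : ∀ w, Ideal.Quotient.mk I (rep w) = e.symm w := fun w =>
    (Ideal.Quotient.mk_surjective (e.symm w)).choose_spec
  have hsub : T ⊆ ⋃ w ∈ W, (rep w + ·) '' (I : Set O) := by
    intro n hn
    simp only [Set.mem_iUnion]
    refine ⟨e (Ideal.Quotient.mk I n), ?_, n - rep (e (Ideal.Quotient.mk I n)), ?_, by simp⟩
    · rw [Fintype.mem_piFinset]
      intro i
      rw [Finset.mem_erase]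
      refine ⟨?_, Finset.mem_univ _⟩
      have : e (Ideal.Quotient.mk I n) i = Ideal.Quotient.mk (J i) n :=
        he n i
      rw [this, Ne, Ideal.Quotient.eq]
      exact hr i.1 i.2 n hn
    · rw [SetLike.mem_coe, ← Ideal.Quotient.eq, hrep]; simp
  have hle : δ T ≤ W.card * (1 / (Nat.card (O ⧸ I) : ℝ)) := by
    refine (hδmono _ _ hsub).trans ((delta_biUnion_le δ h0 hδunion W _).trans ?_)
    simp only [hδtrans, hδideal I hIne, Finset.sum_const, nsmul_eq_mul]
    exact le_rfl
  refine hle.trans (le_of_eq ?_)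
  rw [hcard, hWcard]
  push_cast
  rw [one_div, ← Finset.prod_inv_distrib, ← Finset.prod_mul_distrib]
  refine Finset.prod_congr rfl fun ℓ _ => ?_
  have h1 : (((ℓ : ℕ) - 1 : ℕ) : ℝ) = (ℓ : ℕ) - 1 := by
    rw [Nat.cast_sub ℓ.2.one_le]; simp
  rw [h1, sub_mul, one_mul, mul_inv_cancel₀ (by exact_mod_cast (hpos ℓ).ne')]

lemma indicator_tsum_top_fin (P : Set Nat.Primes)
    (h : ∑' ℓ : Nat.Primes, Set.indicator P (fun ℓ => ((ℓ : ℕ) : ℝ≥0∞)⁻¹) ℓ = ⊤) (R : ℝ) :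
    ∃ F : Finset Nat.Primes, (∀ ℓ ∈ F, ℓ ∈ P) ∧ R < ∑ ℓ ∈ F, ((ℓ : ℕ) : ℝ)⁻¹ := by
  classical
  have h1 : ENNReal.ofReal R < ∑' ℓ : Nat.Primes,
      Set.indicator P (fun ℓ => ((ℓ : ℕ) : ℝ≥0∞)⁻¹) ℓ := by
    rw [h]; exact ENNReal.ofReal_lt_top
  rw [ENNReal.tsum_eq_iSup_sum, lt_iSup_iff] at h1
  obtain ⟨F, hF⟩ := h1
  refine ⟨F.filter (· ∈ P), fun ℓ hℓ => (Finset.mem_filter.1 hℓ).2, ?_⟩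
  have h2 : ∑ ℓ ∈ F, Set.indicator P (fun ℓ => ((ℓ : ℕ) : ℝ≥0∞)⁻¹) ℓ
      = ENNReal.ofReal (∑ ℓ ∈ F.filter (· ∈ P), ((ℓ : ℕ) : ℝ)⁻¹) := by
    rw [ENNReal.ofReal_sum_of_nonneg (fun _ _ => by positivity), Finset.sum_filter]
    refine Finset.sum_congr rfl fun ℓ _ => ?_
    by_cases hP : ℓ ∈ P
    · rw [Set.indicator_of_mem hP, if_pos hP, ENNReal.ofReal_inv_of_pos
        (by exact_mod_cast ℓ.2.pos), ENNReal.ofReal_natCast]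
    · rw [Set.indicator_of_notMem hP, if_neg hP]
  rw [h2] at hF
  exact (ENNReal.ofReal_lt_ofReal_iff').1 hF |>.1

lemma delta_singleton {O : Type*} [CommRing O] [CharZero O] (δ : Set O → ℝ)
    (hδ0 : ∀ P, 0 ≤ δ P)
    (hδmono : ∀ P Q, P ⊆ Q → δ P ≤ δ Q)
    (hδtrans : ∀ (α : O) (P : Set O), δ ((α + ·) '' P) = δ P)
    (hδideal : ∀ I : Ideal O, I ≠ ⊥ → δ (I : Set O) = 1 / (Nat.card (O ⧸ I) : ℝ))
    (BB : Set ℕ) (hBB : ∀ ℓ ∈ BB, ∃ q : Ideal O, Nat.card (O ⧸ q) = ℓ)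
    (h : ∑' ℓ : Nat.Primes, Set.indicator {ℓ : Nat.Primes | (ℓ : ℕ) ∈ BB}
      (fun ℓ => ((ℓ : ℕ) : ℝ≥0∞)⁻¹) ℓ = ⊤) (x : O) : δ {x} = 0 := by
  classical
  have key : ∀ N : ℕ, ∃ ℓ : Nat.Primes, (ℓ : ℕ) ∈ BB ∧ N < (ℓ : ℕ) := by
    intro N
    by_contra! hcon
    obtain ⟨F, hFP, hF⟩ := indicator_tsum_top_fin _ h (N + 1)
    have hc : F.card ≤ N + 1 := by
      have := Finset.card_le_card_of_injOn (s := F) (t := Finset.range (N + 1))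
        (fun ℓ : Nat.Primes => (ℓ : ℕ))
        (fun ℓ hℓ => by
          have := hcon ℓ (hFP ℓ hℓ)
          simp only [Finset.coe_range, Set.mem_Iio]; omega)
        (fun a _ b _ hab => Subtype.ext hab)
      simpa using this
    have hs : ∑ ℓ ∈ F, ((ℓ : ℕ) : ℝ)⁻¹ ≤ F.card := by
      have := Finset.sum_le_card_nsmul F (fun ℓ : Nat.Primes => ((ℓ : ℕ) : ℝ)⁻¹) 1
        (fun ℓ _ => inv_le_one_of_one_le₀ (by exact_mod_cast ℓ.2.one_le))
      simpa using this
    have : (F.card : ℝ) ≤ N + 1 := by exact_mod_cast hc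
    linarith
  refine le_antisymm (le_of_forall_pos_le_add fun ε hε => ?_) (hδ0 _)
  obtain ⟨N, hN⟩ := exists_nat_gt (1 / ε)
  obtain ⟨ℓ, hℓ, hNℓ⟩ := key N
  obtain ⟨q, hq⟩ := hBB _ hℓ
  have hmem : ((ℓ : ℕ) : O) ∈ q := by
    rw [← Ideal.Quotient.eq_zero_iff_mem, ← hq, map_natCast]
    have h2 : (Nat.card (O ⧸ q)) • (1 : O ⧸ q) = 0 := card_nsmul_eq_zero'
    simpa using h2
  have hqne : q ≠ ⊥ := by
    rintro rfl
    rw [Ideal.mem_bot, Nat.cast_eq_zero] at hmem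
    exact ℓ.2.pos.ne' hmem
  have h1 : δ {x} ≤ δ (q : Set O) := by
    rw [← hδtrans x (q : Set O)]
    refine hδmono _ _ ?_
    rintro _ rfl
    exact ⟨0, q.zero_mem, by simp⟩
  rw [hδideal q hqne, hq] at h1
  have h3 : (N : ℝ) < ℓ := by exact_mod_cast hNℓ
  have h4 : 1 / ε < ((ℓ : ℕ) : ℝ) := hN.trans h3
  have h5 : 1 / ((ℓ : ℕ) : ℝ) < ε := by
    rw [one_div_lt (by exact_mod_cast ℓ.2.pos) hε]; exact h4
  linarith

lemma density_zero {O : Type*} [CommRing O] [CharZero O] (δ : Set O → ℝ)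
    (hδ0 : ∀ P, 0 ≤ δ P)
    (hδmono : ∀ P Q, P ⊆ Q → δ P ≤ δ Q)
    (hδunion : ∀ P Q, δ (P ∪ Q) ≤ δ P + δ Q)
    (hδtrans : ∀ (α : O) (P : Set O), δ ((α + ·) '' P) = δ P)
    (hδideal : ∀ I : Ideal O, I ≠ ⊥ → δ (I : Set O) = 1 / (Nat.card (O ⧸ I) : ℝ))
    (T : Set O) (BB : Set ℕ)
    (hBB : BB = {ℓ | ∃ q : Ideal O, Nat.card (O ⧸ q) = ℓ ∧ ∃ r, ∀ n ∈ T, n - r ∉ q})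
    (h : ∑' ℓ : Nat.Primes, Set.indicator {ℓ : Nat.Primes | (ℓ : ℕ) ∈ BB}
      (fun ℓ => ((ℓ : ℕ) : ℝ≥0∞)⁻¹) ℓ = ⊤) :
    δ T = 0 ∧ ∀ x, δ {x} = 0 := by
  classical
  have hs : ∀ x, δ {x} = 0 := delta_singleton δ hδ0 hδmono hδtrans hδideal BB
    (fun ℓ hℓ => by rw [hBB] at hℓ; obtain ⟨q, hq, _⟩ := hℓ; exact ⟨q, hq⟩) h
  have h0 : δ ∅ = 0 := le_antisymm ((hδmono _ _ (Set.empty_subset {0})).trans (hs 0).le) (hδ0 _)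
  refine ⟨le_antisymm (le_of_forall_pos_le_add fun ε hε => ?_) (hδ0 _), hs⟩
  obtain ⟨F, hFP, hF⟩ := indicator_tsum_top_fin _ h (-Real.log ε)
  have hch : ∀ ℓ : Nat.Primes, ∃ q : Ideal O, ∃ r : O, ℓ ∈ F →
      Nat.card (O ⧸ q) = (ℓ : ℕ) ∧ ∀ n ∈ T, n - r ∉ q := by
    intro ℓ
    by_cases hℓ : ℓ ∈ F
    · have := hFP ℓ hℓ
      simp only [Set.mem_ofPred_eq, hBB] at this
      obtain ⟨q, hq, r, hr⟩ := this
      exact ⟨q, r, fun _ => ⟨hq, hr⟩⟩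
    · exact ⟨⊥, 0, fun h => absurd h hℓ⟩
  choose q r hqr using hch
  have hb := density_fin δ h0 hδmono hδunion hδtrans hδideal T F q r
    (fun ℓ hℓ => (hqr ℓ hℓ).1) (fun ℓ hℓ => (hqr ℓ hℓ).2)
  have hb2 : ∏ ℓ ∈ F, (1 - ((ℓ : ℕ) : ℝ)⁻¹) ≤ ∏ ℓ ∈ F, Real.exp (-((ℓ : ℕ) : ℝ)⁻¹) := by
    refine Finset.prod_le_prod (fun ℓ _ => ?_) (fun ℓ _ => ?_)
    · have : ((ℓ : ℕ) : ℝ)⁻¹ ≤ 1 := inv_le_one_of_one_le₀ (by exact_mod_cast ℓ.2.one_le)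
      linarith
    · have := Real.add_one_le_exp (-((ℓ : ℕ) : ℝ)⁻¹)
      linarith
  rw [← Real.exp_sum, Finset.sum_neg_distrib] at hb2
  have hb3 : Real.exp (-∑ ℓ ∈ F, ((ℓ : ℕ) : ℝ)⁻¹) ≤ ε := by
    rw [← Real.le_log_iff_exp_le hε]; linarith
  linarith

end PartH

end

/-- **Non-trivial specializations have density 1.**
`K` a number field, `f ∈ O_K[X]` monic squarefree of odd degree `≥ 3`, `S` a
finite set of primes with `O = O_{K,S}` a PID, `δ` a density on `O`. If
`[A,2B,C]` is a primitive form over `O[X]` with `B² − AC = f`, `A` coprime to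
`f` in `K[X]`, and the class of `⟨A, Y − B⟩` in `Cl(K[X][Y]/⟨Y² − f⟩)` is not
a square, then the set of `n ∈ O` such that `[A(n), 2B(n), C(n)]` is **not**
`GL₂ᵗʷ`-equivalent over `O` to the principal form `[1, 0, −f(n)]` has density
`1`; in particular it is infinite. -/
theorem nontrivial_specializations_density_one
    (K : Type*) [Field K] [NumberField K]
    (S : Finset (HeightOneSpectrum (𝓞 K)))
    (hPID : IsPrincipalIdealRing (SInt K S))
    (f : Polynomial (𝓞 K)) (hmonic : f.Monic) (hsqfree : Squarefree f)
    (hodd : Odd f.natDegree) (hdeg : 3 ≤ f.natDegree)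
    (δ : Set (SInt K S) → ℝ)
    (hδ01 : ∀ P, 0 ≤ δ P ∧ δ P ≤ 1)
    (hδuniv : δ Set.univ = 1)
    (hδmono : ∀ P Q, P ⊆ Q → δ P ≤ δ Q)
    (hδunion : ∀ P Q, δ (P ∪ Q) ≤ δ P + δ Q)
    (hδtrans : ∀ (α : SInt K S) (P : Set (SInt K S)), δ ((α + ·) '' P) = δ P)
    (hδideal : ∀ I : Ideal (SInt K S), I ≠ ⊥ →
        δ (I : Set (SInt K S)) = 1 / (Nat.card (SInt K S ⧸ I) : ℝ))
    (A B C : Polynomial (SInt K S))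
    (hrel : B ^ 2 - A * C = f.map (algebraMap (𝓞 K) (SInt K S)))
    (hprim : Ideal.span {A, 2 * B, C} = (⊤ : Ideal (Polynomial (SInt K S))))
    (hcop : IsCoprime (A.map (algebraMap (SInt K S) K)) (f.map (algebraMap (𝓞 K) K)))
    (hnotsq : ¬ ∃ J : FractionalIdeal (HypRing K (f.map (algebraMap (𝓞 K) K)))⁰
          (FractionRing (HypRing K (f.map (algebraMap (𝓞 K) K)))),
        IsUnit J ∧
        ∃ g : FractionRing (HypRing K (f.map (algebraMap (𝓞 K) K))), g ≠ 0 ∧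
          (HypIdeal K (f.map (algebraMap (𝓞 K) K)) (A.map (algebraMap (SInt K S) K))
              (B.map (algebraMap (SInt K S) K)) :
              FractionalIdeal (HypRing K (f.map (algebraMap (𝓞 K) K)))⁰
                (FractionRing (HypRing K (f.map (algebraMap (𝓞 K) K))))) =
            spanSingleton (HypRing K (f.map (algebraMap (𝓞 K) K)))⁰ g * J ^ 2) :
    δ {n : SInt K S |
      ¬ ∃ M : Matrix (Fin 2) (Fin 2) (SInt K S), IsUnit M.det ∧
        ∀ x y : SInt K S,
          M.det * (A.eval n * x ^ 2 + 2 * B.eval n * x * y + C.eval n * y ^ 2) =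
            (M 0 0 * x + M 0 1 * y) ^ 2
              - (f.map (algebraMap (𝓞 K) (SInt K S))).eval n
                * (M 1 0 * x + M 1 1 * y) ^ 2} = 1 ∧
    {n : SInt K S |
      ¬ ∃ M : Matrix (Fin 2) (Fin 2) (SInt K S), IsUnit M.det ∧
        ∀ x y : SInt K S,
          M.det * (A.eval n * x ^ 2 + 2 * B.eval n * x * y + C.eval n * y ^ 2) =
            (M 0 0 * x + M 0 1 * y) ^ 2
              - (f.map (algebraMap (𝓞 K) (SInt K S))).eval n
                * (M 1 0 * x + M 1 1 * y) ^ 2}.Infinite := by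

  classical
  haveI := hPID
  set fK := f.map (algebraMap (𝓞 K) K) with hfK
  set AK := A.map (algebraMap (SInt K S) K) with hAK
  set BK := B.map (algebraMap (SInt K S) K) with hBK
  have hfKmonic : fK.Monic := hmonic.map _
  have hfKsq : Squarefree fK := sqfree_map f hmonic hsqfree
  have hfKdeg : fK.natDegree = f.natDegree := hmonic.natDegree_map _
  have hmapf : (f.map (algebraMap (𝓞 K) (SInt K S))).map (algebraMap (SInt K S) K) = fK := by
    rw [Polynomial.map_map]
    congr 1
  have hAne : AK ≠ 0 := by
    intro h0
    rw [h0, isCoprime_zero_left] at hcop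
    have := Polynomial.natDegree_eq_zero_of_isUnit hcop
    omega
  have hrelK : BK ^ 2 - AK * C.map (algebraMap (SInt K S) K) = fK := by
    rw [← hmapf, ← hrel]; simp [hAK, hBK]
  obtain ⟨x, y, z, hxyz⟩ : ∃ x y z : (SInt K S)[X], x * A + y * (2 * B) + z * C = 1 := by
    have h1 : (1 : (SInt K S)[X]) ∈ Ideal.span {A, 2 * B, C} := by rw [hprim]; trivial
    rw [Ideal.mem_span_insert] at h1
    obtain ⟨x, w, hw, h1⟩ := h1
    rw [Ideal.mem_span_pair] at hw
    obtain ⟨y, z, hw⟩ := hw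
    exact ⟨x, y, z, by rw [h1, ← hw]; ring⟩
  have hxyzK : x.map (algebraMap (SInt K S) K) * AK + y.map (algebraMap (SInt K S) K) * (2 * BK)
      + z.map (algebraMap (SInt K S) K) * C.map (algebraMap (SInt K S) K) = 1 := by
    have := congrArg (Polynomial.map (algebraMap (SInt K S) K)) hxyz
    simpa [hAK, hBK] using this
  have hno : ∀ ε : K, ε ≠ 0 → ∃ q : K[X], Irreducible q ∧ q ∣ fK ∧
      ¬ ∃ p, q ∣ Polynomial.C ε * AK - p ^ 2 := by
    intro ε hε
    by_contra! hcon
    obtain ⟨p, hp⟩ := crt_step (Polynomial.C ε * AK) fK hfKsq hcon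
    exact hnotsq (alg_step hfKsq (by rw [hfKdeg]; exact hodd) hAne hcop hrelK hxyzK hε hp)
  obtain ⟨E, hE⟩ := units_mod_sq K S
  let Te : (SInt K S)ˣ → Set (SInt K S) := fun e => {n | ∃ u v : SInt K S,
    (e : SInt K S) * A.eval n = u ^ 2 - (f.map (algebraMap (𝓞 K) (SInt K S))).eval n * v ^ 2}
  have hz : ∀ e : (SInt K S)ˣ, δ (Te e) = 0 ∧ ∀ x, δ {x} = 0 := by
    intro e
    have he0 : ((e : SInt K S) : K) ≠ 0 := by
      have := e.ne_zero
      exact_mod_cast this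
    obtain ⟨q, hq, hqf, hns⟩ := hno _ he0
    exact density_zero δ (fun P => (hδ01 P).1) hδmono hδunion hδtrans hδideal (Te e) _ rfl
      (div_step K S f hmonic A (e : SInt K S) q hq hqf hns (Te e) (fun n hn => hn) _ rfl)
  have hs : ∀ x, δ {x} = 0 := (hz 1).2
  have h0 : δ ∅ = 0 :=
    le_antisymm ((hδmono _ _ (Set.empty_subset {0})).trans (hs 0).le) (hδ01 _).1
  set G := {n : SInt K S |
      ¬ ∃ M : Matrix (Fin 2) (Fin 2) (SInt K S), IsUnit M.det ∧
        ∀ x y : SInt K S,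
          M.det * (A.eval n * x ^ 2 + 2 * B.eval n * x * y + C.eval n * y ^ 2) =
            (M 0 0 * x + M 0 1 * y) ^ 2
              - (f.map (algebraMap (𝓞 K) (SInt K S))).eval n
                * (M 1 0 * x + M 1 1 * y) ^ 2} with hG
  have hsub : Gᶜ ⊆ ⋃ e ∈ E, Te e := by
    intro n hn
    have hn2 : ¬ ¬ ∃ M : Matrix (Fin 2) (Fin 2) (SInt K S), IsUnit M.det ∧
        ∀ x y : SInt K S,
          M.det * (A.eval n * x ^ 2 + 2 * B.eval n * x * y + C.eval n * y ^ 2) =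
            (M 0 0 * x + M 0 1 * y) ^ 2
              - (f.map (algebraMap (𝓞 K) (SInt K S))).eval n
                * (M 1 0 * x + M 1 1 * y) ^ 2 := hn
    rw [not_not] at hn2
    obtain ⟨M, hM, hMe⟩ := hn2
    have h1 := hMe 1 0
    obtain ⟨e, he, t, ht⟩ := hE hM.unit
    have hdet : M.det = (e : SInt K S) * (t : SInt K S) ^ 2 := by
      have := congrArg (fun w : (SInt K S)ˣ => (w : SInt K S)) ht
      simpa using this
    have htt : (t : SInt K S) * ((t⁻¹ : (SInt K S)ˣ) : SInt K S) = 1 := t.mul_inv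
    rw [hdet] at h1
    simp only [Set.mem_iUnion]
    refine ⟨e, he, M 0 0 * ((t⁻¹ : (SInt K S)ˣ) : SInt K S),
      M 1 0 * ((t⁻¹ : (SInt K S)ˣ) : SInt K S), ?_⟩
    generalize ((t⁻¹ : (SInt K S)ˣ) : SInt K S) = s at htt
    generalize (t : SInt K S) = t' at htt h1
    linear_combination s ^ 2 * h1 - (e : SInt K S) * A.eval n * (t' * s + 1) * htt
  have hGc : δ Gᶜ = 0 := by
    refine le_antisymm ?_ (hδ01 _).1
    refine (hδmono _ _ hsub).trans ((delta_biUnion_le δ h0 hδunion E _).trans ?_)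
    exact (Finset.sum_eq_zero fun e _ => (hz e).1).le
  have hG1 : δ G = 1 := by
    refine le_antisymm (hδ01 _).2 ?_
    have := hδunion G Gᶜ
    rw [Set.union_compl_self, hδuniv, hGc] at this
    linarith
  refine ⟨hG1, fun hfin => ?_⟩
  have h2 : δ G ≤ 0 := by
    have h3 := delta_biUnion_le δ h0 hδunion hfin.toFinset (fun x => ({x} : Set (SInt K S)))
    refine (hδmono _ _ ?_).trans (h3.trans (Finset.sum_eq_zero fun e _ => hs e).le)
    intro x hx
    simpa using hx
  linarith
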